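/- arXiv:1605.09333 — 2 statements merged into one kernel-verified Lean document; each statement's English description precedes it below -/
import Mathlib

section
/- Let Q = Q(2n,q) be a nondegenerate parabolic quadric in PG(2n,q) and let R be a codimension-2 subspace such that Q ∩ R is a cone with vertex a point over a hyperbolic quadric Q^+(2n−3,q). Then the number of totally singular lines of Q meeting R is exactly q^{4n−5} + ((q^{2n}−1)(q^{2n−2}−1))/((q−1)(q²−1)) − q^{4n−5} computed as: |Q ∩ R|·(q^{2n−2}−1)/(q−1) − q·σ, where |Q ∩ R| = q(q^{n−1}−1)(q^{n−2}+1)/(q−1) + 1 and σ = (q^{n−1}−1)(q^{n−2}+1)/(q−1) + q²(q^{2n−4}−1)(q^{n−1}−1)(q^{n−3}+1)/((q²−1)(q−1)) is the number of totally singular lines contained in R; equivalently, the number of totally singular lines of Q disjoint from R equals q^{4n−5} − q^{3n−4}. -/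
/-!
All counts of subspaces are reduced to counts of vectors: a point is spanned by `q - 1` vectors, and
a totally singular line has `(q² - 1)(q² - q)` bases `(u, v)`, which are the pairs with
`Q u = Q v = B(u, v) = 0` and `v` outside the span of `u` (`B` is the polar form of `Q`).

Let `u ≠ 0` be singular. If `B(u, ·) ≠ 0`, then `Q (v + t u) = Q v + t B(u, v)`, so that exactly one
vector in `q` among those not orthogonal to `u` is singular (`card_shear`). Hence the number of
singular vectors orthogonal to `u` depends only on the number `Z` of all singular vectors and on the
dimension (`card_perp`); this takes the place of the transitivity of the orthogonal group. If `u` is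
in the radical, all `Z` singular vectors are orthogonal to it. Both forms of the statement are, up
to a permutation of the coordinates, the form `x · a + c z²` with `c = 1` (parabolic) or `c = 0`
(cone), for which `Z` and the singular part of the radical are computed directly
(`card_modelForm_zero`, `modelForm_radical`). This gives the number of all totally singular lines,
and the number `σ` of those inside `R` (`card_lines_modelForm`).

For the lines meeting `R`, count the bases `(u, v)` of totally singular lines with `u ∈ R`. On the
one hand each nonzero singular `u ∈ R` has the same number of partners `v`
(`card_parabolic_perp`); on the other hand a line inside `R` contributes `(q² - 1)(q² - q)` bases,
and a line meeting `R` in one point contributes `(q - 1)(q² - q)` (`card_flags`). The closed formulas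
follow by arithmetic (`line_arith`).
-/

/-- The standard (nondegenerate) parabolic quadratic form
`η(x) = Σ_{i=1}^{m} x_{2i-1} x_{2i} + x_{2m+1}²` on `F^{2m+1}` (0-based indexing). -/
def parabolicForm (F : Type*) [Field F] (m : ℕ) : (Fin (2 * m + 1) → F) → F :=
  fun x => (∑ i : Fin m, x ⟨2 * (i : ℕ), by have := i.isLt; omega⟩ *
      x ⟨2 * (i : ℕ) + 1, by have := i.isLt; omega⟩) + x ⟨2 * m, by omega⟩ ^ 2

/-- The quadratic form on `F^{2m+1}` whose singular points form a cone with point vertex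
over a hyperbolic quadric `Q⁺(2m−1,q)`. -/
def hyperbolicConeForm (F : Type*) [Field F] (m : ℕ) : (Fin (2 * m + 1) → F) → F :=
  fun x => ∑ i : Fin m, x ⟨2 * (i : ℕ), by have := i.isLt; omega⟩ *
      x ⟨2 * (i : ℕ) + 1, by have := i.isLt; omega⟩

set_option linter.unusedSectionVars false

/-! ### Double counting -/

section Counting

variable {A B : Type*} [Finite A] [Finite B]

theorem card_pairs (p : A → Prop) (r : A → B → Prop) (t : ℕ)
    (h : ∀ a, p a → Nat.card {b // r a b} = t) :
    Nat.card {x : A × B // p x.1 ∧ r x.1 x.2} = Nat.card {a // p a} * t := by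
  classical
  have := Fintype.ofFinite A
  let e : {x : A × B // p x.1 ∧ r x.1 x.2} ≃ Σ a : {a // p a}, {b // r a.1 b} :=
    { toFun := fun x => ⟨⟨x.1.1, x.2.1⟩, ⟨x.1.2, x.2.2⟩⟩
      invFun := fun y => ⟨(y.1.1, y.2.1), y.1.2, y.2.2⟩
      left_inv := fun _ => rfl
      right_inv := fun _ => rfl }
  rw [Nat.card_congr e, Nat.card_sigma, Finset.sum_congr rfl (fun a _ => h a.1 a.2)]
  simp

theorem card_split (p r : A → Prop) :
    Nat.card {x // p x ∧ r x} + Nat.card {x // p x ∧ ¬ r x} = Nat.card {x // p x} := by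
  classical
  have := Fintype.ofFinite A
  simp only [Nat.card_eq_fintype_card, Fintype.card_subtype, ← Finset.filter_filter]
  exact Finset.card_filter_add_card_filter_not _

/-- Counting the points of `p` through a map `g` onto `l` whose fibers all have `t` elements. -/
theorem card_by_fiber (p : A → Prop) (l : B → Prop) (g : A → B) (t : ℕ)
    (hp : ∀ x, p x → l (g x)) (h : ∀ y, l y → Nat.card {x // p x ∧ g x = y} = t) :
    Nat.card {x // p x} = Nat.card {y // l y} * t := by
  rw [← card_pairs l (fun y x => p x ∧ g x = y) t h]
  exact Nat.card_congr
    { toFun := fun x => ⟨(g x.1, x.1), hp _ x.2, x.2, rfl⟩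
      invFun := fun y => ⟨y.1.2, y.2.2.1⟩
      left_inv := fun _ => rfl
      right_inv := by rintro ⟨⟨a, b⟩, h1, h2, h3⟩; simp at h3; subst h3; rfl }

end Counting

/-! ### Vectors, points and lines over a finite field -/

section Vectors

variable {F V : Type*} [Field F] [Finite F] [AddCommGroup V] [Module F V] [Finite V]

/-- If a function is affine along every line of direction `u`, then on the lines where it is not
constant it vanishes exactly once, hence on a proportion `1 / q` of their points. -/
theorem card_shear (f g : V → F) (u : V) (hf : ∀ (v : V) (t : F), f (v + t • u) = f v + t * g v)
    (hg : ∀ (v : V) (t : F), g (v + t • u) = g v) :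
    Nat.card {v // g v ≠ 0 ∧ f v = 0} * Nat.card F = Nat.card {v // g v ≠ 0} := by
  rw [← Nat.card_prod]
  refine Nat.card_congr
    { toFun := fun x => ⟨x.1.1 + x.2 • u, by rw [hg]; exact x.1.2.1⟩
      invFun := fun w => (⟨w.1 + (-(f w.1 / g w.1)) • u, by rw [hg]; exact w.2, by
        rw [hf]; have := w.2; field_simp; ring⟩, f w.1 / g w.1)
      left_inv := ?_
      right_inv := ?_ }
  · rintro ⟨⟨v, h1, h2⟩, t⟩
    have : f (v + t • u) / g (v + t • u) = t := by
      rw [hf, hg, h2]; field_simp; ring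
    ext
    · simp [this]
    · exact this
  · rintro ⟨w, hw⟩
    ext
    simp

theorem card_submodule (L : Submodule F V) :
    Nat.card L = Nat.card F ^ Module.finrank F L := Module.natCard_eq_pow_finrank

theorem card_linear_fiber (l : V →ₗ[F] F) (hl : l ≠ 0) (s : F) :
    Nat.card {v // l v = s} * Nat.card F = Nat.card V := by
  obtain ⟨u, hu⟩ : ∃ u, l u ≠ 0 := by
    by_contra! h
    exact hl (LinearMap.ext h)
  have := card_shear (fun v => l v - s) (fun _ => l u) u
    (fun v t => by simp; ring) (fun _ _ => rfl)
  simpa [hu, sub_eq_zero] using this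

theorem card_nonzero_mem (L : Submodule F V) :
    Nat.card {v // v ∈ L ∧ v ≠ 0} = Nat.card L - 1 := by
  have h := card_split (fun v => v ∈ L) (fun v => v = 0)
  have h1 : Nat.card {v // v ∈ L ∧ v = 0} = 1 := by
    rw [Nat.card_eq_one_iff_unique]
    refine ⟨⟨fun a b => Subtype.ext (a.2.2.trans b.2.2.symm)⟩, ⟨0, by simp⟩⟩
  have h2 : Nat.card L = Nat.card {v // v ∈ L} := rfl
  simp only [ne_eq]
  omega

theorem card_diff (P : V → Prop) (N : Submodule F V) (hN : ∀ v ∈ N, P v) :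
    Nat.card {v // v ∉ N ∧ P v} = Nat.card {v // P v} - Nat.card N := by
  have h := card_split P (fun v => v ∈ N)
  have h1 : Nat.card {v // P v ∧ v ∈ N} = Nat.card N :=
    Nat.card_congr (Equiv.subtypeEquivRight fun v => ⟨fun h => h.2, fun h => ⟨hN v h, h⟩⟩)
  have h2 : Nat.card {v // v ∉ N ∧ P v} = Nat.card {v // P v ∧ v ∉ N} :=
    Nat.card_congr (Equiv.subtypeEquivRight fun v => and_comm)
  omega

theorem finrank_span_pair' {u v : V} (hu : u ≠ 0) (hv : v ∉ Submodule.span F {u}) :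
    Module.finrank F (Submodule.span F {u, v}) = 2 := by
  have h : LinearIndependent F ![u, v] := by
    rw [LinearIndependent.pair_iff' hu]
    intro a ha
    exact hv (Submodule.mem_span_singleton.2 ⟨a, ha⟩)
  have := finrank_span_eq_card h
  rw [show Set.range ![u, v] = {u, v} by
    simp [Matrix.range_cons, Matrix.range_empty, Set.pair_comm]] at this
  simpa using this

theorem card_span_singleton {u : V} (hu : u ≠ 0) :
    Nat.card (Submodule.span F {u}) = Nat.card F := by
  rw [card_submodule, finrank_span_singleton hu, pow_one]

/-- Each point with property `C` is spanned by `q - 1` nonzero vectors. -/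
theorem card_points (C : Submodule F V → Prop) :
    Nat.card {v : V // v ≠ 0 ∧ C (Submodule.span F {v})} =
      Nat.card {L : Submodule F V // Module.finrank F L = 1 ∧ C L} * (Nat.card F - 1) := by
  refine card_by_fiber _ _ (fun v => Submodule.span F {v}) _
    (fun v hv => ⟨finrank_span_singleton hv.1, hv.2⟩) ?_
  rintro L ⟨hL, hC⟩
  have := card_nonzero_mem L
  rw [card_submodule, hL, pow_one] at this
  rw [← this]
  refine Nat.card_congr (Equiv.subtypeEquivRight fun v => ⟨?_, ?_⟩)
  · rintro ⟨⟨h0, -⟩, rfl⟩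
    exact ⟨Submodule.mem_span_singleton_self v, h0⟩
  · rintro ⟨hv, h0⟩
    have : Submodule.span F {v} = L :=
      Submodule.eq_of_le_of_finrank_eq (by simpa using hv)
        (by rw [hL, finrank_span_singleton h0])
    exact ⟨⟨h0, this ▸ hC⟩, this⟩

/-- Double counting of the bases `(u, v)` with `u ∈ S` of the lines with property `C`, when all
these lines meet `S` in the same number `s` of vectors. -/
theorem card_flags (S : Submodule F V) (C : Submodule F V → Prop) (s : ℕ)
    (hs : ∀ L : Submodule F V, Module.finrank F L = 2 → C L → Nat.card ↥(S ⊓ L) = s) :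
    Nat.card {p : V × V // (p.1 ∈ S ∧ p.1 ≠ 0) ∧ p.2 ∉ Submodule.span F {p.1} ∧
        C (Submodule.span F {p.1, p.2})} =
      Nat.card {L : Submodule F V // Module.finrank F L = 2 ∧ C L} *
        ((s - 1) * (Nat.card F ^ 2 - Nat.card F)) := by
  refine card_by_fiber _ _ (fun p : V × V => Submodule.span F {p.1, p.2}) _
    (fun p hp => ⟨finrank_span_pair' hp.1.2 hp.2.1, hp.2.2⟩) ?_
  rintro L ⟨hL, hC⟩
  rw [← hs L hL hC, ← card_nonzero_mem, ← card_pairs _ (fun u v => v ∉ Submodule.span F {u} ∧ v ∈ L)]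
  · refine Nat.card_congr (Equiv.subtypeEquivRight fun p => ⟨?_, ?_⟩)
    · rintro ⟨⟨⟨hS, h0⟩, hi, -⟩, rfl⟩
      exact ⟨⟨⟨hS, Submodule.subset_span (by simp)⟩, h0⟩, hi, Submodule.subset_span (by simp)⟩
    · rintro ⟨⟨⟨hS, h1⟩, h0⟩, hi, h2⟩
      have : Submodule.span F {p.1, p.2} = L :=
        Submodule.eq_of_le_of_finrank_eq
          (Submodule.span_le.2 (by rintro x (rfl | rfl) <;> assumption))
          (by rw [hL, finrank_span_pair' h0 hi])
      exact ⟨⟨⟨hS, h0⟩, hi, this ▸ hC⟩, this⟩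
  · rintro u ⟨⟨-, hu⟩, h0⟩
    rw [card_diff (fun v => v ∈ L) _ (by
      intro v hv; exact (Submodule.span_singleton_le_iff_mem _ _).2 hu hv), card_span_singleton h0]
    congr 1
    exact (card_submodule L).trans (by rw [hL])

end Vectors

/-! ### Totally singular pairs of vectors -/

section Forms

open QuadraticMap

variable {F V : Type*} [Field F] [Finite F] [AddCommGroup V] [Module F V] [Finite V]

/-- Totally singular subspaces of a function `Q` (in practice, of a quadratic form). -/
def IsTS (Q : V → F) (L : Submodule F V) : Prop := ∀ x ∈ L, Q x = 0

theorem isTS_span_pair (Q : QuadraticForm F V) (u v : V) :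
    IsTS Q (Submodule.span F {u, v}) ↔ Q u = 0 ∧ Q v = 0 ∧ polar Q u v = 0 := by
  constructor
  · intro h
    have h1 := h u (Submodule.subset_span (by simp))
    have h2 := h v (Submodule.subset_span (by simp))
    have h3 := h (u + v) (add_mem (Submodule.subset_span (by simp))
      (Submodule.subset_span (by simp)))
    exact ⟨h1, h2, by simp [polar, h1, h2, h3]⟩
  · rintro ⟨h1, h2, h3⟩ x hx
    obtain ⟨a, b, rfl⟩ := Submodule.mem_span_pair.1 hx
    rw [QuadraticMap.map_add Q]
    simp [QuadraticMap.map_smul, h1, h2, h3]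

theorem isTS_span_singleton (Q : QuadraticForm F V) (u : V) :
    IsTS Q (Submodule.span F {u}) ↔ Q u = 0 := by
  constructor
  · intro h; exact h u (Submodule.mem_span_singleton_self u)
  · intro h x hx
    obtain ⟨a, rfl⟩ := Submodule.mem_span_singleton.1 hx
    simp [QuadraticMap.map_smul, h]

/-- The singular vectors orthogonal to a singular vector `u` outside the radical. Since `Q` is
affine along the lines of direction `u`, `card_shear` counts the singular vectors not orthogonal
to `u`; the others are the complement. -/
theorem card_perp (Q : QuadraticForm F V) (u : V) (hu : Q u = 0) (w : V) (hw : polar Q u w ≠ 0) :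
    (Nat.card {v // Q v = 0 ∧ polar Q u v = 0} + Nat.card {v // polar Q u v ≠ 0 ∧ Q v = 0} =
      Nat.card {v // Q v = 0}) ∧
    Nat.card {v // polar Q u v ≠ 0 ∧ Q v = 0} * Nat.card F ^ 2 + Nat.card V =
      Nat.card V * Nat.card F := by
  have h1 := card_split (fun v => Q v = 0) (fun v => polar Q u v = 0)
  have h1' : Nat.card {v // polar Q u v ≠ 0 ∧ Q v = 0} =
      Nat.card {v // Q v = 0 ∧ ¬ polar Q u v = 0} :=
    Nat.card_congr (Equiv.subtypeEquivRight fun v => and_comm)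
  have hu' : polar Q u u = 0 := by rw [polar_self, hu, smul_zero]
  have h2 := card_shear (fun v => Q v) (fun v => polar Q u v) u
    (fun v t => by
      rw [QuadraticMap.map_add Q, QuadraticMap.map_smul, hu, polar_smul_right, polar_comm]; simp)
    (fun v t => by rw [polar_add_right, polar_smul_right, hu']; simp)
  have h3 := card_split (fun _ : V => True) (fun v => polar Q u v = 0)
  have h4 := card_linear_fiber (polarBilin Q u)
    (fun h => hw (by simpa using LinearMap.congr_fun h w)) 0
  simp only [true_and, polarBilin_apply_apply] at h3 h4
  have h5 : Nat.card {_v : V // True} = Nat.card V :=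
    Nat.card_congr (Equiv.subtypeUnivEquiv fun _ => trivial)
  refine ⟨by omega, ?_⟩
  rw [h5] at h3
  calc _ = Nat.card {v // polar Q u v ≠ 0 ∧ Q v = 0} * Nat.card F * Nat.card F +
        Nat.card {v // polar Q u v = 0} * Nat.card F := by rw [h4]; ring
    _ = Nat.card V * Nat.card F := by rw [h2, ← h3]; ring

/-- Counting pairs: if every admissible first vector `u` has the same number `t` of singular
vectors in its orthogonal space, it extends in `t - q` ways to a basis of a totally singular
line. -/
theorem card_ts_pairs (Q : QuadraticForm F V) (a : V → Prop) (t : ℕ)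
    (ha : ∀ u, a u → u ≠ 0 ∧ Q u = 0 ∧ Nat.card {v // Q v = 0 ∧ polar Q u v = 0} = t) :
    Nat.card {p : V × V // a p.1 ∧ p.2 ∉ Submodule.span F {p.1} ∧
        IsTS Q (Submodule.span F {p.1, p.2})} =
      Nat.card {u // a u} * (t - Nat.card F) := by
  apply card_pairs a
    (fun u v => v ∉ Submodule.span F {u} ∧ IsTS Q (Submodule.span F {u, v}))
  intro u hu
  obtain ⟨h0, h1, ht⟩ := ha u hu
  simp only [isTS_span_pair, h1, true_and]
  rw [card_diff (fun v => Q v = 0 ∧ polar Q u v = 0), ht, card_span_singleton h0]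
  intro v hv
  obtain ⟨b, rfl⟩ := Submodule.mem_span_singleton.1 hv
  rw [QuadraticMap.map_smul, polar_smul_right, polar_self, h1]
  simp

/-- Totally singular subspaces inside the image of an isometric embedding correspond to totally
singular subspaces of the source. -/
theorem card_ts_map {W : Type*} [AddCommGroup W] [Module F W] (i : W →ₗ[F] V)
    (hi : Function.Injective i) (Q : V → F) (k : ℕ) :
    Nat.card {L : Submodule F V // Module.finrank F L = k ∧ L ≤ LinearMap.range i ∧ IsTS Q L} =
      Nat.card {L : Submodule F W // Module.finrank F L = k ∧ IsTS (fun x => Q (i x)) L} := by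
  symm
  refine Nat.card_congr
    { toFun := fun L => ⟨L.1.map i, ?_, LinearMap.map_le_range, ?_⟩
      invFun := fun L => ⟨L.1.comap i, ?_, ?_⟩
      left_inv := fun L => Subtype.ext (Submodule.comap_map_eq_of_injective hi _)
      right_inv := fun L => Subtype.ext (Submodule.map_comap_eq_of_le L.2.2.1) }
  · exact (Submodule.equivMapOfInjective i hi L.1).finrank_eq.symm.trans L.2.1
  · rintro _ ⟨x, hx, rfl⟩
    exact L.2.2 x hx
  · rw [(Submodule.equivMapOfInjective i hi _).finrank_eq,
      Submodule.map_comap_eq_of_le L.2.2.1, L.2.1]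
  · intro x hx
    exact L.2.2.2 _ hx

end Forms

/-! ### The model form `x · a + c z²` -/

section Model

open QuadraticMap

variable (F : Type*) [Field F]

/-- The quadratic form `x · a + c z²` on vectors written `((x, z), a)` with `x, a ∈ F^m` and
`z ∈ F`. It is parabolic for `c = 1`, and a cone with point vertex over a hyperbolic quadric for
`c = 0`. -/
def modelForm (m : ℕ) (c : F) : QuadraticForm F (((Fin m → F) × F) × (Fin m → F)) :=
  (∑ i : Fin m, linMulLin
      (LinearMap.proj i ∘ₗ LinearMap.fst F _ _ ∘ₗ LinearMap.fst F _ _)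
      (LinearMap.proj i ∘ₗ LinearMap.snd F _ _)) +
    c • linMulLin (LinearMap.snd F _ _ ∘ₗ LinearMap.fst F _ _)
      (LinearMap.snd F _ _ ∘ₗ LinearMap.fst F _ _)

variable {F}

theorem modelForm_apply (m : ℕ) (c : F) (u : ((Fin m → F) × F) × (Fin m → F)) :
    modelForm F m c u = u.1.1 ⬝ᵥ u.2 + c * (u.1.2 * u.1.2) := by
  simp [modelForm, dotProduct]

theorem polar_modelForm (m : ℕ) (c : F) (u v : ((Fin m → F) × F) × (Fin m → F)) :
    polar (modelForm F m c) u v =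
      u.1.1 ⬝ᵥ v.2 + v.1.1 ⬝ᵥ u.2 + 2 * c * u.1.2 * v.1.2 := by
  simp only [polar, modelForm_apply, Prod.fst_add, Prod.snd_add, add_dotProduct, dotProduct_add]
  ring

/-- The splitting of coordinates into even ones, the last one, and odd ones. -/
noncomputable def coordEquiv (m : ℕ) :
    (Fin (2 * m + 1) → F) ≃ₗ[F] ((Fin m → F) × F) × (Fin m → F) :=
  LinearEquiv.ofInjectiveOfFinrankEq
    { toFun := fun x => ((fun i => x ⟨2 * (i : ℕ), by have := i.isLt; omega⟩, x ⟨2 * m, by omega⟩),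
        fun i => x ⟨2 * (i : ℕ) + 1, by have := i.isLt; omega⟩)
      map_add' := fun _ _ => rfl
      map_smul' := fun _ _ => rfl }
    (by
      intro x y h
      simp only [LinearMap.coe_mk, AddHom.coe_mk, Prod.mk.injEq] at h
      obtain ⟨⟨h1, h2⟩, h3⟩ := h
      ext ⟨j, hj⟩
      rcases Nat.even_or_odd' j with ⟨i, rfl | rfl⟩
      · rcases Nat.lt_or_ge i m with hi | hi
        · exact congrFun h1 ⟨i, hi⟩
        · obtain rfl : i = m := by omega
          exact h2
      · exact congrFun h3 ⟨i, by omega⟩)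
    (by simp; ring)

theorem parabolicForm_eq (m : ℕ) (x : Fin (2 * m + 1) → F) :
    parabolicForm F m x = modelForm F m 1 (coordEquiv m x) := by
  rw [modelForm_apply, one_mul, ← pow_two]
  rfl

theorem hyperbolicConeForm_eq (m : ℕ) (x : Fin (2 * m + 1) → F) :
    hyperbolicConeForm F m x = modelForm F m 0 (coordEquiv m x) := by
  rw [modelForm_apply, zero_mul, add_zero]
  rfl

variable [Finite F]

theorem card_dot_fiber (m : ℕ) (x : Fin m → F) (hx : x ≠ 0) (s : F) :
    Nat.card {a : Fin m → F // x ⬝ᵥ a = s} * Nat.card F = Nat.card F ^ m := by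
  have := card_linear_fiber (dotProductBilin F F x) (fun h => hx (by
    ext i; simpa using LinearMap.congr_fun h (Pi.single i 1))) s
  simpa [Nat.card_fun] using this

/-- The number of singular vectors of the model form, `m = k + 1`: for `x ≠ 0` the vector `a` runs
over an affine hyperplane, for `x = 0` it is free as soon as `c z² = 0`. -/
theorem card_modelForm_zero (k : ℕ) (c : F) :
    Nat.card {u // modelForm F (k + 1) c u = 0} + Nat.card F ^ (k + 1) =
      Nat.card F ^ (2 * k + 2) + Nat.card {z : F // c * (z * z) = 0} * Nat.card F ^ (k + 1) := by
  have hq : 0 < Nat.card F := Nat.card_pos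
  have h0 := card_split (fun u => modelForm F (k + 1) c u = 0) (fun u => u.1.1 = 0)
  have h1 : Nat.card {u // modelForm F (k + 1) c u = 0 ∧ u.1.1 = 0} =
      Nat.card {z : F // c * (z * z) = 0} * Nat.card F ^ (k + 1) := by
    have h := card_pairs (fun y : (Fin (k + 1) → F) × F => y.1 = 0 ∧ c * (y.2 * y.2) = 0)
      (fun _ (_ : Fin (k + 1) → F) => True) (Nat.card F ^ (k + 1)) (fun y _ => by
        rw [Nat.card_congr (Equiv.subtypeUnivEquiv fun _ => trivial)]; simp [Nat.card_fun])
    have h' := card_pairs (fun y : Fin (k + 1) → F => y = 0)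
      (fun _ (z : F) => c * (z * z) = 0) _ (fun y _ => rfl)
    simp only [Nat.card_unique, one_mul] at h'
    rw [h'] at h
    rw [← h]
    refine Nat.card_congr (Equiv.subtypeEquivRight fun u => ?_)
    rw [modelForm_apply]
    constructor
    · rintro ⟨h, h0⟩
      simpa [h0] using h
    · rintro ⟨⟨h0, h⟩, -⟩
      simp [h0, h]
  have h2 : Nat.card {u // modelForm F (k + 1) c u = 0 ∧ ¬ u.1.1 = 0} =
      (Nat.card F ^ (k + 1) - 1) * Nat.card F * Nat.card F ^ k := by
    have h := card_pairs (fun y : (Fin (k + 1) → F) × F => y.1 ≠ 0 ∧ True)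
      (fun y (a : Fin (k + 1) → F) => y.1 ⬝ᵥ a = - (c * (y.2 * y.2))) (Nat.card F ^ k)
      (fun y hy => by
        have := card_dot_fiber _ y.1 hy.1 (- (c * (y.2 * y.2)))
        rw [pow_succ] at this
        exact Nat.eq_of_mul_eq_mul_right hq this)
    have h' := card_pairs (fun y : Fin (k + 1) → F => y ≠ 0)
      (fun _ (_ : F) => True) (Nat.card F) (fun y _ => by
        rw [Nat.card_congr (Equiv.subtypeUnivEquiv fun _ => trivial)])
    have h3 := card_nonzero_mem (⊤ : Submodule F (Fin (k + 1) → F))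
    rw [card_submodule] at h3
    simp only [Submodule.mem_top, true_and, finrank_top, Module.finrank_fin_fun] at h3
    rw [h3] at h'
    rw [h'] at h
    rw [← h]
    refine Nat.card_congr (Equiv.subtypeEquivRight fun u => ?_)
    rw [modelForm_apply, add_eq_zero_iff_eq_neg]
    tauto
  have h4 : 1 ≤ Nat.card F ^ (k + 1) := Nat.one_le_pow _ _ hq
  obtain ⟨b, hb⟩ := Nat.exists_eq_add_of_le h4
  rw [← h0, h1, h2]
  have e : Nat.card F ^ (2 * k + 2) = Nat.card F ^ (k + 1) * Nat.card F ^ (k + 1) := by ring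
  rw [e, mul_assoc, ← pow_succ', hb]
  simp
  ring

/-- The singular vectors of the radical of the polar form are the `((0, z), 0)` with `c z² = 0`.
In characteristic two and for `c = 1`, the polar form has a nonzero radical, the nucleus, but it
contains no nonzero singular vector. -/
theorem modelForm_radical (m : ℕ) (c : F) (u : ((Fin m → F) × F) × (Fin m → F)) :
    (modelForm F m c u = 0 ∧ ∀ v, polar (modelForm F m c) u v = 0) ↔
      (c * (u.1.2 * u.1.2) = 0 ∧ u.1.1 = 0 ∧ u.2 = 0) := by
  constructor
  · rintro ⟨h1, h2⟩
    have hx : u.1.1 = 0 := by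
      ext i
      simpa [polar_modelForm] using h2 ((0, 0), Pi.single i 1)
    have ha : u.2 = 0 := by
      ext i
      simpa [polar_modelForm] using h2 ((Pi.single i 1, 0), 0)
    exact ⟨by simpa [modelForm_apply, hx] using h1, hx, ha⟩
  · rintro ⟨h1, h2, h3⟩
    refine ⟨by simp [modelForm_apply, h1, h2], fun v => ?_⟩
    have : c * u.1.2 = 0 := by
      rcases mul_eq_zero.1 h1 with h | h
      · simp [h]
      · simp [mul_self_eq_zero.1 h]
    simp [polar_modelForm, h2, h3, mul_assoc, this]

end Model

/-! ### Lines of the model form -/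

section ModelLines

open QuadraticMap

variable {F : Type*} [Field F] [Finite F]

/-- `card_perp` in dimension `2 k + 3`, solved for the number of orthogonal singular vectors. -/
theorem card_perp_eq {V : Type*} [AddCommGroup V] [Module F V] [Finite V] (Q : QuadraticForm F V)
    (k : ℕ) (hV : Nat.card V = Nat.card F ^ (2 * k + 3)) (u : V) (hu : Q u = 0) (w : V)
    (hw : polar Q u w ≠ 0) :
    Nat.card {v // Q v = 0 ∧ polar Q u v = 0} =
      Nat.card {v // Q v = 0} + Nat.card F ^ (2 * k + 1) - Nat.card F ^ (2 * k + 2) := by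
  obtain ⟨h1, h2⟩ := card_perp Q u hu w hw
  have hq : 0 < Nat.card F := Nat.card_pos
  rw [hV] at h2
  have h3 : Nat.card {v // polar Q u v ≠ 0 ∧ Q v = 0} + Nat.card F ^ (2 * k + 1) =
      Nat.card F ^ (2 * k + 2) := by
    refine Nat.eq_of_mul_eq_mul_right (pow_pos hq 2) ?_
    calc _ = _ := by rw [add_mul, ← pow_add, h2]
      _ = _ := by ring
  omega

theorem card_model (m : ℕ) :
    Nat.card (((Fin m → F) × F) × (Fin m → F)) = Nat.card F ^ (2 * m + 1) := by
  simp only [Nat.card_prod, Nat.card_fun, Nat.card_fin]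
  ring

/-- The number of totally singular lines of the model form, times the number of bases of a line.
The first summand counts the bases whose first vector lies in the radical. -/
theorem card_lines_modelForm (k : ℕ) (c : F) (K Z : ℕ)
    (hK : Nat.card {z : F // c * (z * z) = 0} = K)
    (hZ : Nat.card {u // modelForm F (k + 1) c u = 0} = Z) :
    Nat.card {L : Submodule F (((Fin (k + 1) → F) × F) × (Fin (k + 1) → F)) //
        Module.finrank F L = 2 ∧ IsTS (modelForm F (k + 1) c) L} *
      ((Nat.card F ^ 2 - 1) * (Nat.card F ^ 2 - Nat.card F)) =
    (K - 1) * (Z - Nat.card F) +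
      (Z - K) * (Z + Nat.card F ^ (2 * k + 1) - Nat.card F ^ (2 * k + 2) - Nat.card F) := by
  rw [← card_flags ⊤ _ (Nat.card F ^ 2) (fun L hL _ => by rw [top_inf_eq, card_submodule, hL])]
  rw [← card_split _ (fun p => ∀ v, polar (modelForm F (k + 1) c) p.1 v = 0)]
  have hrad : Nat.card {u // modelForm F (k + 1) c u = 0 ∧
      ∀ v, polar (modelForm F (k + 1) c) u v = 0} = K := by
    rw [← hK]
    exact Nat.card_congr
      { toFun := fun u => ⟨u.1.1.2, ((modelForm_radical _ _ _).1 u.2).1⟩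
        invFun := fun z => ⟨((0, z.1), 0), (modelForm_radical _ _ _).2 ⟨z.2, rfl, rfl⟩⟩
        left_inv := by
          rintro ⟨⟨⟨x, z⟩, a⟩, h⟩
          obtain ⟨-, h1, h2⟩ := (modelForm_radical _ _ _).1 h
          simp only at h1 h2
          subst h1 h2
          rfl
        right_inv := fun _ => rfl }
  congr 1
  · have h := card_ts_pairs (modelForm F (k + 1) c)
      (fun u => (modelForm F (k + 1) c u = 0 ∧
        ∀ v, polar (modelForm F (k + 1) c) u v = 0) ∧ u ≠ 0) Z
      (fun u hu => ⟨hu.2, hu.1.1, by simp only [hu.1.2, and_true, hZ]⟩)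
    have h0 : Nat.card {u // (modelForm F (k + 1) c u = 0 ∧
        ∀ v, polar (modelForm F (k + 1) c) u v = 0) ∧ u ≠ 0} = K - 1 := by
      have h1 := card_split (fun u => modelForm F (k + 1) c u = 0 ∧
        ∀ v, polar (modelForm F (k + 1) c) u v = 0) (fun u => u = 0)
      have h2 : Nat.card {u // (modelForm F (k + 1) c u = 0 ∧
          ∀ v, polar (modelForm F (k + 1) c) u v = 0) ∧ u = 0} = 1 := by
        rw [Nat.card_eq_one_iff_unique]
        exact ⟨⟨fun a b => Subtype.ext (a.2.2.trans b.2.2.symm)⟩, ⟨0, by simp⟩⟩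
      simp only [ne_eq]
      omega
    rw [h0] at h
    rw [← h]
    refine Nat.card_congr (Equiv.subtypeEquivRight fun p => ?_)
    simp only [Submodule.mem_top, true_and, isTS_span_pair]
    tauto
  · have h := card_ts_pairs (modelForm F (k + 1) c)
      (fun u => modelForm F (k + 1) c u = 0 ∧
        ¬ ∀ v, polar (modelForm F (k + 1) c) u v = 0)
      (Z + Nat.card F ^ (2 * k + 1) - Nat.card F ^ (2 * k + 2))
      (fun u hu => by
        obtain ⟨w, hw⟩ := not_forall.1 hu.2
        refine ⟨?_, hu.1, ?_⟩
        · rintro rfl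
          simp at hw
        · rw [card_perp_eq _ k (card_model _) u hu.1 w hw, hZ])
    have h1 := card_split (fun u => modelForm F (k + 1) c u = 0)
      (fun u => ∀ v, polar (modelForm F (k + 1) c) u v = 0)
    rw [hrad, hZ] at h1
    rw [← Nat.eq_sub_of_add_eq' h1, ← h]
    refine Nat.card_congr (Equiv.subtypeEquivRight fun p => ?_)
    simp only [Submodule.mem_top, true_and, isTS_span_pair]
    constructor
    · tauto
    · rintro ⟨⟨h1, h2⟩, h3⟩
      refine ⟨⟨?_, h3⟩, h2⟩
      intro h0
      simp [h0] at h2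

end ModelLines

/-! ### The parabolic form -/

section Parabolic

open QuadraticMap

variable {F : Type*} [Field F]

/-- `parabolicForm` as a bundled quadratic form. -/
noncomputable def parabolicQF (F : Type*) [Field F] (m : ℕ) :
    QuadraticForm F (Fin (2 * m + 1) → F) :=
  (modelForm F m 1).comp (coordEquiv m).toLinearMap

theorem coe_parabolicQF (m : ℕ) : ⇑(parabolicQF F m) = parabolicForm F m := by
  ext x
  rw [parabolicForm_eq]
  rfl

variable [Finite F]

theorem card_one_mul_sq : Nat.card {z : F // (1 : F) * (z * z) = 0} = 1 := by
  simp

theorem card_zero_mul_sq : Nat.card {z : F // (0 : F) * (z * z) = 0} = Nat.card F := by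
  rw [Nat.card_congr (Equiv.subtypeUnivEquiv fun _ => zero_mul _)]

theorem card_parabolic_zero (k : ℕ) :
    Nat.card {v // parabolicForm F (k + 1) v = 0} = Nat.card F ^ (2 * k + 2) := by
  have h := card_modelForm_zero (F := F) k 1
  rw [card_one_mul_sq, one_mul, Nat.add_right_cancel_iff] at h
  rw [← h]
  exact Nat.card_congr ((coordEquiv (k + 1)).toEquiv.subtypeEquiv fun v => by
    rw [parabolicForm_eq]; rfl)

/-- The number of singular vectors in the orthogonal space of a nonzero singular vector does not
depend on that vector, because such a vector is never in the radical. -/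
theorem card_parabolic_perp (k : ℕ) (u : Fin (2 * (k + 1) + 1) → F) (hu : u ≠ 0)
    (h : parabolicQF F (k + 1) u = 0) :
    Nat.card {v // parabolicQF F (k + 1) v = 0 ∧ polar (parabolicQF F (k + 1)) u v = 0} =
      Nat.card F ^ (2 * k + 1) := by
  have hex : ∃ w, polar (modelForm F (k + 1) 1) (coordEquiv (k + 1) u) w ≠ 0 := by
    by_contra! hn
    obtain ⟨h1, h2, h3⟩ := (modelForm_radical _ _ _).1 ⟨h, hn⟩
    apply hu
    rw [← (coordEquiv (F := F) (k + 1)).map_eq_zero_iff]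
    ext
    · exact congrFun h2 _
    · simpa using h1
    · exact congrFun h3 _
  obtain ⟨w, hw⟩ := hex
  have hp : polar (parabolicQF F (k + 1)) u ((coordEquiv (k + 1)).symm w) =
      polar (modelForm F (k + 1) 1) (coordEquiv (k + 1) u) w := by
    simp [polar, parabolicQF]
  rw [card_perp_eq _ k (by simp [Nat.card_fun]; ring) u h _ (hp ▸ hw), coe_parabolicQF,
    card_parabolic_zero]
  omega

end Parabolic

/-! ### Closed formulas -/

/-- The arithmetic that extracts the closed formulas from the counting relations. Here
`n = k + 2`, `P`, `s` are the numbers of singular points and of totally singular lines in `R`, `N`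
is the number of totally singular lines meeting `R` in exactly one point, `M` that of those
meeting `R`, `D` that of those disjoint from `R`; `Z` is the number of singular vectors of `R`. -/
theorem line_arith (q k P s N M D Z : ℕ) (hq : 2 ≤ q)
    (hZ : Z + q ^ (k + 1) = q ^ (2 * k + 2) + q * q ^ (k + 1))
    (hP : Z - 1 = P * (q - 1))
    (hs : s * ((q ^ 2 - 1) * (q ^ 2 - q)) =
      (q - 1) * (Z - q) + (Z - q) * (Z + q ^ (2 * k + 1) - q ^ (2 * k + 2) - q))
    (hN : s * ((q ^ 2 - 1) * (q ^ 2 - q)) + N * ((q - 1) * (q ^ 2 - q)) =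
      (Z - 1) * (q ^ (2 * k + 3) - q))
    (hM : s + N = M)
    (hD : (M + D) * ((q ^ 2 - 1) * (q ^ 2 - q)) = (q ^ (2 * k + 4) - 1) * (q ^ (2 * k + 3) - q)) :
    P = q * ((q ^ (k + 1) - 1) * (q ^ k + 1)) / (q - 1) + 1 ∧
    s = (q ^ (k + 1) - 1) * (q ^ k + 1) / (q - 1) +
        q ^ 2 * ((q ^ (2 * k) - 1) * (q ^ (k + 1) - 1) * (q ^ (k - 1) + 1)) /
          ((q ^ 2 - 1) * (q - 1)) ∧
    M = P * ((q ^ (2 * k + 2) - 1) / (q - 1)) - q * s ∧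
    D = q ^ (4 * k + 3) - q ^ (3 * k + 2) := by
  obtain ⟨r, rfl⟩ : ∃ r, q = r + 1 := ⟨q - 1, by omega⟩
  have hr : 0 < r := by omega
  obtain ⟨G, hG⟩ : ∃ G, (r + 1) ^ (k + 1) = r * G + 1 := by
    obtain ⟨G, hG⟩ := Nat.sub_dvd_pow_sub_pow (r + 1) 1 (k + 1)
    have : 1 ≤ (r + 1) ^ (k + 1) := Nat.one_le_pow _ _ (by omega)
    simp only [Nat.add_sub_cancel, one_pow] at hG
    exact ⟨G, by omega⟩
  obtain ⟨H, hH⟩ : ∃ H, (r + 1) ^ (2 * k) = r * (r + 2) * H + 1 := by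
    obtain ⟨H, hH⟩ := Nat.sub_dvd_pow_sub_pow ((r + 1) ^ 2) 1 k
    have : 1 ≤ (r + 1) ^ (2 * k) := Nat.one_le_pow _ _ (by omega)
    rw [one_pow, ← pow_mul, show (r + 1) ^ 2 - 1 = r * (r + 2) by
      rw [show (r + 1) ^ 2 = r * (r + 2) + 1 by ring]; rfl] at hH
    exact ⟨H, by omega⟩
  -- For `k = 0` the truncated exponent `k - 1` is harmless, since `H = 0`.
  have hHk : H * ((r + 1) ^ (k - 1) + 1) * (r + 1) = H * ((r + 1) ^ k + (r + 1)) := by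
    rcases k with _ | k
    · have : H = 0 := by
        have : r * (r + 2) * H = 0 := by simpa using hH
        simpa [hr.ne'] using this
      simp [this]
    · simp only [Nat.add_sub_cancel]; ring
  obtain ⟨E, hE⟩ : ∃ E, (r + 1) ^ (2 * k + 2) = r * E + 1 := by
    obtain ⟨G, hG⟩ := Nat.sub_dvd_pow_sub_pow (r + 1) 1 (2 * k + 2)
    have : 1 ≤ (r + 1) ^ (2 * k + 2) := Nat.one_le_pow _ _ (by omega)
    simp only [Nat.add_sub_cancel, one_pow] at hG
    exact ⟨G, by omega⟩
  have e1 : (r + 1) ^ 2 - 1 = r * (r + 2) := by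
    rw [show (r + 1) ^ 2 = r * (r + 2) + 1 by ring]; rfl
  have e2 : (r + 1) ^ 2 - (r + 1) = r * (r + 1) := by
    rw [show (r + 1) ^ 2 = r * (r + 1) + (r + 1) by ring]; simp
  set a := (r + 1) ^ k with ha
  have ha1 : 1 ≤ a := Nat.one_le_pow _ _ (by omega)
  have p1 : (r + 1) ^ (k + 1) = a * (r + 1) := pow_succ _ _
  have p2 : (r + 1) ^ (2 * k) = a ^ 2 := by rw [ha]; ring
  have p3 : (r + 1) ^ (2 * k + 1) = a ^ 2 * (r + 1) := by rw [ha]; ring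
  have p4 : (r + 1) ^ (2 * k + 2) = a ^ 2 * (r + 1) ^ 2 := by rw [ha]; ring
  have p5 : (r + 1) ^ (2 * k + 3) = a ^ 2 * (r + 1) ^ 3 := by rw [ha]; ring
  have p6 : (r + 1) ^ (2 * k + 4) = a ^ 2 * (r + 1) ^ 4 := by rw [ha]; ring
  have p7 : (r + 1) ^ (4 * k + 3) = a ^ 4 * (r + 1) ^ 3 := by rw [ha]; ring
  have p8 : (r + 1) ^ (3 * k + 2) = a ^ 3 * (r + 1) ^ 2 := by rw [ha]; ring
  have d1 : (r + 1) * ((r * G + 1 - 1) * (a + 1)) / r = (r + 1) * (G * (a + 1)) :=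
    Nat.div_eq_of_eq_mul_right hr (by simp; ring)
  have d2 : (r * G + 1 - 1) * (a + 1) / r = G * (a + 1) :=
    Nat.div_eq_of_eq_mul_right hr (by simp; ring)
  have d3 : (r + 1) ^ 2 * ((r * (r + 2) * H + 1 - 1) * (r * G + 1 - 1) *
      ((r + 1) ^ (k - 1) + 1)) / (r * (r + 2) * r) =
      (r + 1) * (G * (H * (a + (r + 1)))) :=
    Nat.div_eq_of_eq_mul_right (by positivity) (by rw [← hHk]; simp; ring)
  have d4 : (r * E + 1 - 1) / r = E := by simp [hr]
  have hZ2 : a ^ 2 * (r + 1) ^ 2 ≤ Z := by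
    rw [p1, p4] at hZ
    have : a * (r + 1) ≤ (r + 1) * (a * (r + 1)) := Nat.le_mul_of_pos_left _ (by omega)
    linarith
  have hZ1 : r + 1 ≤ Z := by
    refine le_trans ?_ hZ2
    calc r + 1 = 1 * (1 * (r + 1)) := by ring
      _ ≤ a ^ 2 * ((r + 1) * (r + 1)) := by
        gcongr
        · exact Nat.one_le_pow _ _ ha1
        · omega
      _ = _ := by ring
  have hT : r + 1 ≤ Z + a ^ 2 * (r + 1) - a ^ 2 * (r + 1) ^ 2 := by
    have : 1 * (r + 1) ≤ a ^ 2 * (r + 1) := Nat.mul_le_mul_right _ (Nat.one_le_pow _ _ ha1)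
    omega
  rw [hG, hE, hH, e1, p7, p8]
  simp only [Nat.add_sub_cancel] at d1 d2 d3 d4 ⊢
  rw [d1, d2, d3, d4]
  rw [e1, e2, Nat.add_sub_cancel] at hs hN
  rw [Nat.add_sub_cancel] at hP
  rw [e1, e2, p5, p6] at hD
  rw [p5] at hN
  rw [p3, p4] at hs
  rw [p1, p4] at hZ
  rw [p1] at hG
  rw [p2] at hH
  rw [p4] at hE
  have l1 : r + 1 ≤ a ^ 2 * (r + 1) ^ 3 := by
    have := Nat.one_le_pow 2 a ha1
    have := Nat.one_le_pow 2 (r + 1) (by omega)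
    calc r + 1 = 1 * (1 * (r + 1)) := by ring
      _ ≤ a ^ 2 * ((r + 1) ^ 2 * (r + 1)) := by gcongr
      _ = _ := by ring
  have l2 : 1 ≤ a ^ 2 * (r + 1) ^ 4 := Nat.one_le_iff_ne_zero.2 (by positivity)
  have l3 : 1 ≤ Z := by omega
  have l4 : a ^ 2 * (r + 1) ^ 2 ≤ Z + a ^ 2 * (r + 1) := by omega
  subst hM
  clear_value a
  zify [l1, l2, l3, l4, hT, hZ1] at hP hs hN hD hZ hG hH hE
  have r0 : (r : ℤ) ≠ 0 := by omega
  have r1 : (r : ℤ) + 1 ≠ 0 := by omega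
  have r2 : (r : ℤ) + 2 ≠ 0 := by omega
  have hZ' : (Z : ℤ) = a ^ 2 * (r + 1) ^ 2 + r * (a * (r + 1)) := by linear_combination hZ
  rw [hZ'] at hP hs hN
  have c1 : (P : ℤ) = (r + 1) * (G * (a + 1)) + 1 := by
    apply mul_left_cancel₀ r0
    linear_combination -hP + (r + 1) * (a + 1) * hG
  have c2 : (s : ℤ) = G * (a + 1) + (r + 1) * (G * (H * (a + (r + 1)))) := by
    apply mul_left_cancel₀ (mul_ne_zero (mul_ne_zero r0 r2) (mul_ne_zero r0 r1))
    have : (r : ℤ) * (r + 2) * (r * (r + 1)) * (G * (a + 1) + (r + 1) * (G * (H * (a + (r + 1)))))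
      = (r * (r + 2)) * (r + 1) * (a + 1) * (r * G) +
        (r + 1) ^ 2 * (r * G) * (r * (r + 2) * H) * (a + (r + 1)) := by ring
    rw [this, show (r : ℤ) * G = a * (r + 1) - 1 by linear_combination -hG,
      show (r : ℤ) * (r + 2) * H = a ^ 2 - 1 by linear_combination -hH]
    linear_combination hs
  have c3 : (s : ℤ) + N + (r + 1) * s = P * E := by
    apply mul_left_cancel₀ (mul_ne_zero r0 (mul_ne_zero r0 r1))
    have : (r : ℤ) * (r * (r + 1)) * (P * E) = (P * r) * (r * E) * (r + 1) := by ring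
    rw [this, ← hP, show (r : ℤ) * E = a ^ 2 * (r + 1) ^ 2 - 1 by linear_combination -hE]
    linear_combination hN
  refine ⟨by exact_mod_cast c1, by exact_mod_cast c2, ?_, ?_⟩
  · have : s + N + (r + 1) * s = P * E := by exact_mod_cast c3
    rw [← this]
    simp
  · have c4 : (D : ℤ) + a ^ 3 * (r + 1) ^ 2 = a ^ 4 * (r + 1) ^ 3 := by
      apply mul_left_cancel₀ (mul_ne_zero r0 (mul_ne_zero (mul_ne_zero r0 r2) (mul_ne_zero r0 r1)))
      linear_combination r * hD - (r + 2) * r * hN + (r + 1) * r * hs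
    have : D + a ^ 3 * (r + 1) ^ 2 = a ^ 4 * (r + 1) ^ 3 := by exact_mod_cast c4
    omega

/-! ### Lines of `Q` relative to `R` -/

/-- Let `Q = Q(2n,q)` be a nondegenerate parabolic quadric in `PG(2n,q)` and
`R` a codimension-2 subspace with `Q ∩ R` a cone with point vertex over a hyperbolic
quadric `Q⁺(2n−3,q)`. Then `|Q ∩ R| = q(q^{n−1}−1)(q^{n−2}+1)/(q−1) + 1`, the number `σ` of
totally singular lines contained in `R` is
`(q^{n−1}−1)(q^{n−2}+1)/(q−1) + q²(q^{2n−4}−1)(q^{n−1}−1)(q^{n−3}+1)/((q²−1)(q−1))`,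
the number of totally singular lines meeting `R` is `|Q ∩ R|·(q^{2n−2}−1)/(q−1) − q·σ`, and
the number of totally singular lines of `Q` disjoint from `R` is `q^{4n−5} − q^{3n−4}`. -/
theorem stmt_14 {F : Type*} [Field F] [Fintype F] (n : ℕ) (hn : 2 ≤ n)
    (q : ℕ) (hq : q = Fintype.card F)
    (R : Submodule F (Fin (2 * n + 1) → F))
    (hR : Module.finrank F R = 2 * n - 1)
    (hcone : ∃ f : R ≃ₗ[F] (Fin (2 * (n - 1) + 1) → F),
      ∀ x : R, parabolicForm F n x.1 = hyperbolicConeForm F (n - 1) (f x)) :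
    Nat.card {L : Submodule F (Fin (2 * n + 1) → F) //
        Module.finrank F L = 1 ∧ L ≤ R ∧ ∀ x ∈ L, parabolicForm F n x = 0} =
      q * ((q ^ (n - 1) - 1) * (q ^ (n - 2) + 1)) / (q - 1) + 1 ∧
    Nat.card {L : Submodule F (Fin (2 * n + 1) → F) //
        Module.finrank F L = 2 ∧ L ≤ R ∧ ∀ x ∈ L, parabolicForm F n x = 0} =
      (q ^ (n - 1) - 1) * (q ^ (n - 2) + 1) / (q - 1) +
        q ^ 2 * ((q ^ (2 * n - 4) - 1) * (q ^ (n - 1) - 1) * (q ^ (n - 3) + 1)) /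
          ((q ^ 2 - 1) * (q - 1)) ∧
    Nat.card {L : Submodule F (Fin (2 * n + 1) → F) //
        Module.finrank F L = 2 ∧ (∀ x ∈ L, parabolicForm F n x = 0) ∧ L ⊓ R ≠ ⊥} =
      (Nat.card {L : Submodule F (Fin (2 * n + 1) → F) //
          Module.finrank F L = 1 ∧ L ≤ R ∧ ∀ x ∈ L, parabolicForm F n x = 0}) *
        ((q ^ (2 * n - 2) - 1) / (q - 1)) -
      q * Nat.card {L : Submodule F (Fin (2 * n + 1) → F) //
          Module.finrank F L = 2 ∧ L ≤ R ∧ ∀ x ∈ L, parabolicForm F n x = 0} ∧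
    Nat.card {L : Submodule F (Fin (2 * n + 1) → F) //
        Module.finrank F L = 2 ∧ (∀ x ∈ L, parabolicForm F n x = 0) ∧ L ⊓ R = ⊥} =
      q ^ (4 * n - 5) - q ^ (3 * n - 4) := by
  obtain ⟨k, rfl⟩ : ∃ k, n = k + 2 := ⟨n - 2, by omega⟩
  have hq2 : 2 ≤ q := by rw [hq]; exact Fintype.one_lt_card
  rw [← Nat.card_eq_fintype_card] at hq
  obtain ⟨f, hf⟩ := hcone
  -- `e` identifies `R` with the degenerate model form.
  let e : R ≃ₗ[F] ((Fin (k + 1) → F) × F) × (Fin (k + 1) → F) := f.trans (coordEquiv (k + 1))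
  have he : ∀ x : R, parabolicForm F (k + 2) x.1 = modelForm F (k + 1) 0 (e x) := fun x => by
    rw [hf, hyperbolicConeForm_eq]; rfl
  have hTS : ∀ L : Submodule F (Fin (2 * (k + 2) + 1) → F),
      (∀ x ∈ L, parabolicForm F (k + 2) x = 0) ↔ IsTS (parabolicQF F (k + 2)) L := fun L => by
    rw [coe_parabolicQF]; rfl
  simp only [hTS]
  -- The singular vectors of `R`.
  obtain ⟨Z, hZdef⟩ : ∃ Z, Nat.card {u // modelForm F (k + 1) 0 u = 0} = Z := ⟨_, rfl⟩
  have hZ := card_modelForm_zero (F := F) k 0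
  rw [card_zero_mul_sq, hZdef, ← hq] at hZ
  have hZR : Nat.card {v // (v ∈ R ∧ v ≠ 0) ∧ parabolicQF F (k + 2) v = 0} = Z - 1 := by
    rw [← hZdef]
    have h1 : Nat.card {u // modelForm F (k + 1) 0 u = 0} =
        Nat.card {v // v ∈ R ∧ parabolicQF F (k + 2) v = 0} := by
      symm
      refine Nat.card_congr
        { toFun := fun v => ⟨e ⟨v.1, v.2.1⟩, by
            rw [← he]; exact (congrFun (coe_parabolicQF _) _).symm.trans v.2.2⟩
          invFun := fun u => ⟨(e.symm u.1).1, (e.symm u.1).2, by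
            rw [coe_parabolicQF, he, e.apply_symm_apply]; exact u.2⟩
          left_inv := fun v => by simp
          right_inv := fun u => by simp }
    have h2 := card_split (fun v => v ∈ R ∧ parabolicQF F (k + 2) v = 0) (fun v => v = 0)
    have h3 : Nat.card {v // (v ∈ R ∧ parabolicQF F (k + 2) v = 0) ∧ v = 0} = 1 := by
      rw [Nat.card_eq_one_iff_unique]
      exact ⟨⟨fun a b => Subtype.ext (a.2.2.trans b.2.2.symm)⟩, ⟨0, by simp⟩⟩
    have h4 : Nat.card {v // (v ∈ R ∧ v ≠ 0) ∧ parabolicQF F (k + 2) v = 0} =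
        Nat.card {v // (v ∈ R ∧ parabolicQF F (k + 2) v = 0) ∧ ¬ v = 0} :=
      Nat.card_congr (Equiv.subtypeEquivRight fun v => by tauto)
    omega
  -- The singular points of `R`.
  have hP := card_points (fun L : Submodule F (Fin (2 * (k + 2) + 1) → F) =>
    L ≤ R ∧ IsTS (parabolicQF F (k + 2)) L)
  have hP' : Nat.card {v // v ≠ 0 ∧ Submodule.span F {v} ≤ R ∧
      IsTS (parabolicQF F (k + 2)) (Submodule.span F {v})} = Z - 1 := by
    rw [← hZR]
    refine Nat.card_congr (Equiv.subtypeEquivRight fun v => ?_)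
    rw [isTS_span_singleton, Submodule.span_singleton_le_iff_mem]
    tauto
  rw [hP', ← hq] at hP
  -- The totally singular lines inside `R`.
  have hs := card_lines_modelForm k 0 _ Z card_zero_mul_sq hZdef
  have hsmap := card_ts_map (R.subtype ∘ₗ e.symm.toLinearMap)
    (R.injective_subtype.comp e.symm.injective) (parabolicQF F (k + 2)) 2
  have hi : (fun u => parabolicQF F (k + 2) ((R.subtype ∘ₗ e.symm.toLinearMap) u)) =
      modelForm F (k + 1) 0 := by
    ext u
    rw [coe_parabolicQF]
    exact (he _).trans (by rw [LinearEquiv.coe_toLinearMap, e.apply_symm_apply])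
  rw [hi, LinearMap.range_comp, LinearEquiv.range, Submodule.map_top, Submodule.range_subtype]
    at hsmap
  rw [← hsmap, ← hq] at hs
  have hflag := card_flags R (fun L : Submodule F (Fin (2 * (k + 2) + 1) → F) =>
    L ≤ R ∧ IsTS (parabolicQF F (k + 2)) L) (q ^ 2)
    (fun L hL hC => by rw [inf_eq_right.2 hC.1, card_submodule, hL, hq])
  -- The totally singular lines meeting `R` in exactly one point.
  have hflag1 := card_flags R (fun L : Submodule F (Fin (2 * (k + 2) + 1) → F) =>
    (IsTS (parabolicQF F (k + 2)) L ∧ L ⊓ R ≠ ⊥) ∧ ¬ L ≤ R) q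
    (fun L hL hC => by
      have h1 : Module.finrank F ↥(R ⊓ L) ≠ 0 := by
        rw [Ne, Submodule.finrank_eq_zero, inf_comm]; exact hC.1.2
      have h2 : Module.finrank F ↥(R ⊓ L) < 2 := by
        exact (Submodule.finrank_lt_finrank_of_lt (lt_of_le_of_ne inf_le_right
          (fun h => hC.2 (inf_eq_right.1 h)))).trans_eq hL
      rw [card_submodule, show Module.finrank F ↥(R ⊓ L) = 1 by omega, pow_one, hq])
  -- Bases of totally singular lines whose first vector lies in `R`.
  have hperp := card_ts_pairs (parabolicQF F (k + 2))
    (fun u => (u ∈ R ∧ u ≠ 0) ∧ parabolicQF F (k + 2) u = 0) (q ^ (2 * k + 3))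
    (fun u hu => ⟨hu.1.2, hu.2, by rw [card_parabolic_perp (k + 1) u hu.1.2 hu.2, hq]; rfl⟩)
  rw [hZR, ← hq, ← card_split _ (fun p => Submodule.span F {p.1, p.2} ≤ R)] at hperp
  have hin : Nat.card {p : (Fin (2 * (k + 2) + 1) → F) × (Fin (2 * (k + 2) + 1) → F) //
      (((p.1 ∈ R ∧ p.1 ≠ 0) ∧ parabolicQF F (k + 2) p.1 = 0) ∧ p.2 ∉ Submodule.span F {p.1} ∧
        IsTS (parabolicQF F (k + 2)) (Submodule.span F {p.1, p.2})) ∧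
        Submodule.span F {p.1, p.2} ≤ R} = _ :=
    (Nat.card_congr (Equiv.subtypeEquivRight fun p => by
      rw [isTS_span_pair]; tauto)).trans hflag
  have hout : Nat.card {p : (Fin (2 * (k + 2) + 1) → F) × (Fin (2 * (k + 2) + 1) → F) //
      (((p.1 ∈ R ∧ p.1 ≠ 0) ∧ parabolicQF F (k + 2) p.1 = 0) ∧ p.2 ∉ Submodule.span F {p.1} ∧
        IsTS (parabolicQF F (k + 2)) (Submodule.span F {p.1, p.2})) ∧
        ¬ Submodule.span F {p.1, p.2} ≤ R} = _ :=
    (Nat.card_congr (Equiv.subtypeEquivRight fun p => by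
      have hne : p.1 ∈ R → p.1 ≠ 0 → Submodule.span F {p.1, p.2} ⊓ R ≠ ⊥ := fun h h0 hb =>
        h0 ((Submodule.mem_bot F).1 (hb ▸ ⟨Submodule.subset_span (by simp), h⟩))
      rw [isTS_span_pair]
      tauto)).trans hflag1
  rw [hin, hout, ← hq] at hperp
  -- All totally singular lines.
  have hD := card_lines_modelForm (F := F) (k + 1) 1 1 _ card_one_mul_sq rfl
  have hDmap := card_ts_map (coordEquiv (F := F) (k + 2)).symm.toLinearMap
    (coordEquiv (F := F) (k + 2)).symm.injective (parabolicQF F (k + 2)) 2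
  have hi' : (fun u => parabolicQF F (k + 2) ((coordEquiv (k + 2)).symm.toLinearMap u)) =
      modelForm F (k + 2) 1 := by
    ext u
    simp [parabolicQF]
  simp only [hi', LinearEquiv.range, le_top, true_and] at hDmap
  have hZp := card_modelForm_zero (F := F) (k + 1) 1
  rw [card_one_mul_sq, one_mul, Nat.add_right_cancel_iff] at hZp
  rw [← hDmap, hZp, ← hq, ← card_split _ (fun L => L ⊓ R ≠ ⊥)] at hD
  have hM := card_split (fun L : Submodule F (Fin (2 * (k + 2) + 1) → F) =>
    Module.finrank F L = 2 ∧ IsTS (parabolicQF F (k + 2)) L ∧ L ⊓ R ≠ ⊥) (fun L => L ≤ R)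
  have hM1 : Nat.card {L : Submodule F (Fin (2 * (k + 2) + 1) → F) //
      (Module.finrank F L = 2 ∧ IsTS (parabolicQF F (k + 2)) L ∧ L ⊓ R ≠ ⊥) ∧ L ≤ R} =
      Nat.card {L : Submodule F (Fin (2 * (k + 2) + 1) → F) //
        Module.finrank F L = 2 ∧ L ≤ R ∧ IsTS (parabolicQF F (k + 2)) L} :=
    Nat.card_congr (Equiv.subtypeEquivRight fun L => by
      constructor
      · tauto
      · rintro ⟨h1, h2, h3⟩
        refine ⟨⟨h1, h3, fun hb => ?_⟩, h2⟩
        rw [inf_eq_left.2 h2] at hb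
        rw [hb, finrank_bot] at h1
        exact absurd h1 (by norm_num))
  rw [hM1] at hM
  simp only [and_assoc, not_not, ne_eq] at hM hD hperp ⊢
  refine line_arith q k _ _ _ _ _ Z hq2 hZ hP hs hperp hM (hD.trans ?_)
  rw [Nat.sub_self, zero_mul, zero_add, Nat.add_sub_cancel_left]
  rfl
end

section
/- Let q be a prime power and n ≥ 2. For the parabolic quadric Q(2n,q) in PG(2n,q) and a codimension-2 subspace R meeting Q in a cone with vertex a line over a parabolic quadric Q(2n−4,q): |Q ∩ R| = (q^{2n−2}−1)/(q−1), the number of totally singular lines contained in R is 1 + q(q^{2n−4}−1)/(q−1) + q²(q²(q^{2n−6}−1)(q^{2n−4}−1)/((q²−1)(q−1)) + (q^{2n−4}−1)/(q−1)), and the number of totally singular lines of Q disjoint from R equals q^{4n−5}. -/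
/-- The quadratic form on `F^{2m+1}` whose singular points form a cone with a line as
vertex over a parabolic quadric `Q(2m−2,q)`: a nondegenerate parabolic form on the first
`2m−1` coordinates, with the last two coordinates in the radical. -/
def lineConeForm (F : Type*) [Field F] (m : ℕ) : (Fin (2 * m + 1) → F) → F :=
  fun x => (∑ i : Fin (m - 1), x ⟨2 * (i : ℕ), by have := i.isLt; omega⟩ *
      x ⟨2 * (i : ℕ) + 1, by have := i.isLt; omega⟩) + x ⟨2 * m - 2, by omega⟩ ^ 2

/-! ### Counting totally singular subspaces by ordered bases -/

section Counting

variable {F : Type*} [Field F]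
variable {V : Type*} [AddCommGroup V] [Module F V]

/-- Each `d`-dimensional subspace is the span of exactly `∏ i < d, (q^d - q^i)` linearly
independent `d`-tuples. -/
theorem card_subspaces_mul [Fintype F] [Finite V] (d : ℕ) (P : Submodule F V → Prop) :
    Nat.card {s : Fin d → V // LinearIndependent F s ∧ P (Submodule.span F (Set.range s))} =
      Nat.card {L : Submodule F V // Module.finrank F L = d ∧ P L} *
        ∏ i : Fin d, (Fintype.card F ^ d - Fintype.card F ^ (i : ℕ)) := by
  classical
  have key : ∀ x : (Σ L : {L : Submodule F V // Module.finrank F L = d ∧ P L},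
      {s : Fin d → L.1 // LinearIndependent F s}),
      Submodule.span F (Set.range fun i => (x.2.1 i : V)) = x.1.1 := by
    intro x
    have h := x.2.2.span_eq_top_of_card_eq_finrank' (by simp [x.1.2.1])
    have := congrArg (Submodule.map x.1.1.subtype) h
    rw [Submodule.map_span, ← Set.range_comp, Submodule.map_top, Submodule.range_subtype] at this
    exact this
  have e : {s : Fin d → V // LinearIndependent F s ∧ P (Submodule.span F (Set.range s))} ≃
      Σ L : {L : Submodule F V // Module.finrank F L = d ∧ P L},
        {s : Fin d → L.1 // LinearIndependent F s} := by
    refine (Equiv.ofBijective (fun x => ⟨fun i => (x.2.1 i : V),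
      x.2.2.map' x.1.1.subtype (Submodule.ker_subtype _),
      by rw [key x]; exact x.1.2.2⟩) ⟨?_, ?_⟩).symm
    · intro x y hxy
      have hxy' : (fun i => (x.2.1 i : V)) = fun i => (y.2.1 i : V) := congrArg Subtype.val hxy
      have h1 : x.1 = y.1 := by
        apply Subtype.ext
        rw [← key x, ← key y, hxy']
      obtain ⟨L, s, hs⟩ := x
      obtain ⟨L', s', hs'⟩ := y
      obtain rfl : L = L' := h1
      have : s = s' := by
        funext i
        exact Subtype.ext (congrFun hxy' i)
      subst this
      rfl
    · rintro ⟨s, hs, hP⟩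
      refine ⟨⟨⟨Submodule.span F (Set.range s), ?_, hP⟩,
        fun i => ⟨s i, Submodule.subset_span ⟨i, rfl⟩⟩, ?_⟩, rfl⟩
      · rw [finrank_span_eq_card hs, Fintype.card_fin]
      · exact LinearIndependent.of_comp (Submodule.subtype _) hs
  have : Finite (Submodule F V) := Finite.of_injective (fun L => (L : Set V)) SetLike.coe_injective
  have := Fintype.ofFinite {L : Submodule F V // Module.finrank F L = d ∧ P L}
  rw [Nat.card_congr e, Nat.card_sigma]
  rw [Finset.sum_congr rfl (fun L _ => by
    rw [card_linearIndependent (by rw [L.2.1])])]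
  rw [Finset.sum_congr rfl (fun L _ => by rw [L.2.1])]
  simp

/-- The number of singular vectors of `Q`, the zero vector included. -/
noncomputable def numSing (Q : QuadraticForm F V) : ℕ := Nat.card {x : V // Q x = 0}

/-- The number of ordered pairs of singular vectors that are orthogonal for the polar form of `Q`.
Linearly dependent pairs are included. -/
noncomputable def numPairs (Q : QuadraticForm F V) : ℕ :=
  Nat.card {p : V × V // Q p.1 = 0 ∧ Q p.2 = 0 ∧ QuadraticMap.polar Q p.1 p.2 = 0}

theorem span_one (Q : QuadraticForm F V) (u : V) :
    (∀ x ∈ Submodule.span F {u}, Q x = 0) ↔ Q u = 0 := by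
  constructor
  · intro h; exact h u (Submodule.mem_span_singleton_self u)
  · intro h x hx
    obtain ⟨a, rfl⟩ := Submodule.mem_span_singleton.1 hx
    rw [QuadraticMap.map_smul, h, smul_zero]

theorem span_two (Q : QuadraticForm F V) (u v : V) :
    (∀ x ∈ Submodule.span F {u, v}, Q x = 0) ↔
      Q u = 0 ∧ Q v = 0 ∧ QuadraticMap.polar Q u v = 0 := by
  constructor
  · intro h
    have hu := h u (Submodule.subset_span (by simp))
    have hv := h v (Submodule.subset_span (by simp))
    have huv := h (u + v) (Submodule.add_mem _ (Submodule.subset_span (by simp))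
      (Submodule.subset_span (by simp)))
    refine ⟨hu, hv, ?_⟩
    rw [QuadraticMap.polar, hu, hv, huv]; simp
  · rintro ⟨hu, hv, huv⟩ x hx
    obtain ⟨a, b, rfl⟩ := Submodule.mem_span_pair.1 hx
    rw [QuadraticMap.map_add Q, QuadraticMap.map_smul, QuadraticMap.map_smul, hu, hv,
      QuadraticMap.polar_smul_left, QuadraticMap.polar_smul_right, huv]
    simp

theorem card_points_s19 [Fintype F] [Finite V] (Q : QuadraticForm F V) :
    Nat.card {L : Submodule F V // Module.finrank F L = 1 ∧ ∀ x ∈ L, Q x = 0} *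
      (Fintype.card F - 1) + 1 = numSing Q := by
  classical
  have h := card_subspaces_mul (F := F) 1 (fun L : Submodule F V => ∀ x ∈ L, Q x = 0)
  simp only [Fin.prod_univ_one, pow_one, Fin.val_zero, pow_zero] at h
  rw [← h, numSing]
  have e : {s : Fin 1 → V // LinearIndependent F s ∧
      ∀ x ∈ Submodule.span F (Set.range s), Q x = 0} ≃ {x : {x : V // Q x = 0} // x.1 ≠ 0} := by
    refine ((Equiv.funUnique (Fin 1) V).subtypeEquiv (q := fun x => Q x = 0 ∧ x ≠ 0) ?_).trans
      (Equiv.subtypeSubtypeEquivSubtypeInter _ _).symm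
    intro s
    have : Set.range s = {s 0} := by
      ext x; simp [Set.mem_range, eq_comm]
    rw [this, span_one, linearIndependent_unique_iff]
    exact and_comm
  rw [Nat.card_congr e]
  have e2 : {x : {x : V // Q x = 0} // x = ⟨0, QuadraticMap.map_zero Q⟩} ⊕
      {x : {x : V // Q x = 0} // ¬ x = ⟨0, QuadraticMap.map_zero Q⟩} ≃ _ := Equiv.sumCompl _
  rw [← Nat.card_congr e2, Nat.card_sum, add_comm]
  congr 1
  · simp
  · apply Nat.card_congr
    refine Equiv.subtypeEquivRight ?_
    intro x
    simp [Subtype.ext_iff]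

/-- An orthogonal pair of singular vectors `(u, v)` is a basis of a totally singular line, or has
`u = 0` and `v` singular, or has `u ≠ 0` and `v` a multiple of `u`. -/
theorem card_lines [Fintype F] [Finite V] (Q : QuadraticForm F V) :
    Nat.card {L : Submodule F V // Module.finrank F L = 2 ∧ ∀ x ∈ L, Q x = 0} *
      ((Fintype.card F ^ 2 - 1) * (Fintype.card F ^ 2 - Fintype.card F)) +
      numSing Q + (numSing Q - 1) * Fintype.card F = numPairs Q := by
  classical
  have h := card_subspaces_mul (F := F) 2 (fun L : Submodule F V => ∀ x ∈ L, Q x = 0)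
  simp only [Fin.prod_univ_two, pow_one, Fin.val_zero, pow_zero, Fin.val_one] at h
  rw [← h, numPairs]
  have e1 : {s : Fin 2 → V // LinearIndependent F s ∧
      ∀ x ∈ Submodule.span F (Set.range s), Q x = 0} ≃
      {p : V × V // LinearIndependent F ![p.1, p.2] ∧
        (Q p.1 = 0 ∧ Q p.2 = 0 ∧ QuadraticMap.polar Q p.1 p.2 = 0)} := by
    refine (finTwoArrowEquiv V).subtypeEquiv ?_
    intro s
    have h1 : s = ![s 0, s 1] := by
      ext i; fin_cases i <;> rfl
    have : Set.range s = {s 0, s 1} := by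
      rw [h1]; simp [Set.pair_comm]
    rw [this, span_two]
    conv_lhs => rw [h1]
    rfl
  have hns : numSing Q - 1 = Nat.card {x : V // Q x = 0 ∧ x ≠ 0} := by
    have e2 : {x : {x : V // Q x = 0} // x = ⟨0, QuadraticMap.map_zero Q⟩} ⊕
      {x : {x : V // Q x = 0} // ¬ x = ⟨0, QuadraticMap.map_zero Q⟩} ≃ _ := Equiv.sumCompl _
    rw [numSing, ← Nat.card_congr e2, Nat.card_sum]
    have : Nat.card {x : {x : V // Q x = 0} // x = ⟨0, QuadraticMap.map_zero Q⟩} = 1 := by simp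
    rw [this, Nat.add_sub_cancel_left]
    apply Nat.card_congr
    refine Equiv.trans (Equiv.subtypeEquivRight ?_)
      (Equiv.subtypeSubtypeEquivSubtypeInter (fun x => Q x = 0) (fun x => x ≠ 0))
    intro x
    simp [Subtype.ext_iff]
  rw [hns, Nat.card_congr e1, numSing, ← Nat.card_eq_fintype_card (α := F), ← Nat.card_prod,
    ← Nat.card_sum, ← Nat.card_sum]
  refine Nat.card_congr (Equiv.ofBijective (Sum.elim (Sum.elim (fun p => ⟨p.1, p.2.2⟩)
    (fun v => ⟨(0, v.1), by simp [v.2]⟩))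
    (fun p => ⟨(p.1.1, p.2 • p.1.1), ?_⟩)) ⟨?_, ?_⟩)
  · simp [QuadraticMap.map_smul, QuadraticMap.polar_smul_right, QuadraticMap.polar_self, p.1.2.1]
  · have hz : ∀ v : V, ¬ LinearIndependent F ![0, v] := fun v hv => hv.ne_zero 0 rfl
    have hd : ∀ (u : V) (c : F), u ≠ 0 → ¬ LinearIndependent F ![u, c • u] := by
      intro u c hu hv
      exact (LinearIndependent.pair_iff' hu).1 hv c rfl
    rintro ((⟨⟨u, v⟩, hi, hp⟩ | ⟨v, hv⟩) | ⟨⟨u, hu, hu0⟩, c⟩)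
      ((⟨⟨u', v'⟩, hi', hp'⟩ | ⟨v', hv'⟩) | ⟨⟨u', hu', hu0'⟩, c'⟩) hh <;>
      simp only [Sum.elim_inl, Sum.elim_inr, Subtype.mk.injEq, Prod.mk.injEq] at hh <;>
      obtain ⟨h1, h2⟩ := hh
    · subst h1 h2; rfl
    · subst h1; exact (hz _ hi).elim
    · subst h1 h2; exact (hd _ _ hu0' hi).elim
    · subst h1; exact (hz _ hi').elim
    · subst h2; rfl
    · exact (hu0' h1.symm).elim
    · subst h1 h2; exact (hd _ _ hu0 hi').elim
    · exact (hu0 h1).elim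
    · subst h1
      obtain rfl := smul_left_injective F hu0 h2
      rfl
  · rintro ⟨⟨u, v⟩, hu, hv, huv⟩
    by_cases hu0 : u = 0
    · subst hu0
      exact ⟨Sum.inl (Sum.inr ⟨v, hv⟩), rfl⟩
    · by_cases hi : LinearIndependent F ![u, v]
      · exact ⟨Sum.inl (Sum.inl ⟨(u, v), hi, hu, hv, huv⟩), rfl⟩
      · rw [LinearIndependent.pair_iff' hu0] at hi
        push Not at hi
        obtain ⟨c, rfl⟩ := hi
        exact ⟨Sum.inr (⟨u, hu, hu0⟩, c), rfl⟩

end Counting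

/-! ### Splitting off a hyperbolic plane -/

section Recursion

variable {F : Type*} [Field F]
variable {V : Type*} [AddCommGroup V] [Module F V]
variable {W : Type*} [AddCommGroup W] [Module F W]

theorem sum_zero_or (A B : ℕ) {α : Type*} [Fintype α] [Zero α] [DecidableEq α] :
    (∑ p : α, if p = 0 then A else B) + B = Fintype.card α * B + A := by
  rw [← Finset.add_sum_erase _ _ (Finset.mem_univ (0 : α)), if_pos rfl,
    Finset.sum_congr rfl (g := fun _ => B)
      (fun p hp => if_neg (Finset.ne_of_mem_erase hp))]
  rw [Finset.sum_const, Finset.card_erase_of_mem (Finset.mem_univ _), Finset.card_univ, smul_eq_mul]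
  have : 0 < Fintype.card α := Fintype.card_pos
  obtain ⟨c, hc⟩ := Nat.exists_eq_add_of_lt this
  rw [hc]
  simp
  ring

/-- For `Q' = x y + Q(z)`: if `x ≠ 0`, then `z` is free and determines `y`; if `x = 0`, then `y` is
free and `z` is singular. The term `Nat.card W` on the left avoids natural subtraction. -/
theorem numSing_hyperbolic [Fintype F] [Finite W] (Q : QuadraticForm F W) (Q' : QuadraticForm F V)
    (e : V ≃ₗ[F] F × F × W)
    (h : ∀ v, Q' v = (e v).1 * (e v).2.1 + Q (e v).2.2) :
    numSing Q' + Nat.card W = Fintype.card F * Nat.card W + Fintype.card F * numSing Q := by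
  classical
  rw [← sum_zero_or (Fintype.card F * numSing Q) (Nat.card W)]
  congr 1
  rw [numSing]
  have e1 : {v : V // Q' v = 0} ≃ Σ x : F, {p : F × W // x * p.1 + Q p.2 = 0} :=
    { toFun := fun v => ⟨(e v.1).1, (e v.1).2, by rw [← h]; exact v.2⟩
      invFun := fun s => ⟨e.symm (s.1, s.2.1), by rw [h]; simpa using s.2.2⟩
      left_inv := fun v => by simp
      right_inv := fun s => by
        obtain ⟨x, p, hp⟩ := s
        have := e.apply_symm_apply (x, p)
        apply Sigma.subtype_ext
        · exact congrArg Prod.fst this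
        · exact congrArg Prod.snd this }
  rw [Nat.card_congr e1, Nat.card_sigma]
  refine Finset.sum_congr rfl fun x _ => ?_
  split_ifs with hx
  · subst hx
    rw [numSing, ← Nat.card_eq_fintype_card, ← Nat.card_prod]
    exact Nat.card_congr
      { toFun := fun p => (p.1.1, ⟨p.1.2, by simpa using p.2⟩)
        invFun := fun p => ⟨(p.1, p.2.1), by simpa using p.2.2⟩
        left_inv := fun p => rfl
        right_inv := fun p => rfl }
  · exact Nat.card_congr
      { toFun := fun p => p.1.2
        invFun := fun z => ⟨(-(Q z) / x, z), by field_simp; ring⟩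
        left_inv := fun p => by
          obtain ⟨⟨y, z⟩, hp⟩ := p
          simp only [Subtype.mk.injEq, Prod.mk.injEq, and_true]
          field_simp
          linear_combination -hp
        right_inv := fun p => rfl }

/-- The orthogonal pairs `((x, y, z), (x', y', z'))` of singular vectors of `x y + Q(z)` with the
first coordinates `x` and `x'` prescribed. -/
def fiberPairs (Q : QuadraticForm F W) (x x' : F) : Type _ :=
  {p : (F × W) × (F × W) // x * p.1.1 + Q p.1.2 = 0 ∧ x' * p.2.1 + Q p.2.2 = 0 ∧
    x * p.2.1 + x' * p.1.1 + QuadraticMap.polar Q p.1.2 p.2.2 = 0}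

theorem fiberPairs_swap (Q : QuadraticForm F W) (x x' : F) :
    Nat.card (fiberPairs Q x x') = Nat.card (fiberPairs Q x' x) := by
  refine Nat.card_congr ((Equiv.prodComm _ _).subtypeEquiv ?_)
  rintro ⟨⟨y, z⟩, ⟨y', z'⟩⟩
  simp only [Equiv.prodComm_apply, Prod.swap]
  rw [QuadraticMap.polar_comm Q z' z, add_comm (x' * y)]
  tauto

/-- For `x ≠ 0` write the second vector as `(x' / x) • u + (0, y₀, w)` with `u` the first one. As `u`
is singular, the conditions say that `w` is singular and fix `y₀`; `z` is free and fixes `y`. -/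
theorem fiberPairs_ne (Q : QuadraticForm F W) (x x' : F) (hx : x ≠ 0) :
    Nat.card (fiberPairs Q x x') = Nat.card W * numSing Q := by
  rw [numSing, ← Nat.card_prod]
  have hQ : ∀ (c : F) (z w : W), Q (w + c • z) =
      Q w + c * c * Q z + c * QuadraticMap.polar Q z w := by
    intro c z w
    rw [QuadraticMap.map_add Q, QuadraticMap.map_smul, QuadraticMap.polar_smul_right,
      QuadraticMap.polar_comm Q w z]
    rfl
  have hB : ∀ (c : F) (z w : W), QuadraticMap.polar Q z (w + c • z) =
      QuadraticMap.polar Q z w + c * (2 * Q z) := by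
    intro c z w
    rw [QuadraticMap.polar_add_right, QuadraticMap.polar_smul_right, QuadraticMap.polar_self]
    simp only [smul_eq_mul, nsmul_eq_mul, Nat.cast_ofNat]
  refine Nat.card_congr
    { toFun := fun p => (p.1.1.2, ⟨p.1.2.2 + (-(x' / x)) • p.1.1.2, ?_⟩)
      invFun := fun p => ⟨((-(Q p.1) / x, p.1),
        ((x' / x) * (-(Q p.1) / x) - QuadraticMap.polar Q p.1 p.2.1 / x,
          p.2.1 + (x' / x) • p.1)), ?_, ?_, ?_⟩
      left_inv := ?_
      right_inv := ?_ }
  · obtain ⟨⟨⟨y, z⟩, ⟨y', z'⟩⟩, h1, h2, h3⟩ := p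
    simp only at h1 h2 h3 ⊢
    rw [hQ]
    field_simp
    linear_combination x' ^ 2 * h1 + x ^ 2 * h2 - x' * x * h3
  · simp only; field_simp; ring
  · obtain ⟨z, w, hw⟩ := p
    simp only
    rw [hQ, hw]
    field_simp
    ring
  · obtain ⟨z, w, hw⟩ := p
    simp only
    rw [hB]
    field_simp
    ring
  · rintro ⟨⟨⟨y, z⟩, ⟨y', z'⟩⟩, h1, h2, h3⟩
    simp only at h1 h2 h3
    apply Subtype.ext
    simp only [Prod.mk.injEq, and_true]
    refine ⟨?_, ?_, ?_⟩
    · field_simp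
      linear_combination -h1
    · rw [hB]
      field_simp
      linear_combination x' * h1 - x * h3
    · rw [neg_smul]; abel
  · rintro ⟨z, w, hw⟩
    simp

theorem fiberPairs_zero [Fintype F] (Q : QuadraticForm F W) :
    Nat.card (fiberPairs Q 0 0) = Fintype.card F ^ 2 * numPairs Q := by
  rw [numPairs, ← Nat.card_eq_fintype_card, sq, ← Nat.card_prod, ← Nat.card_prod]
  exact Nat.card_congr
    { toFun := fun p => ((p.1.1.1, p.1.2.1), ⟨(p.1.1.2, p.1.2.2), by simpa using p.2⟩)
      invFun := fun p => ⟨((p.1.1, p.2.1.1), (p.1.2, p.2.1.2)), by simpa using p.2.2⟩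
      left_inv := fun p => rfl
      right_inv := fun p => rfl }

/-- For `Q' = x y + Q(z)`: all `q² - 1` nonzero choices of the first coordinates `(x, x')` have the
same number of pairs above them, by symmetry. The term on the left avoids natural subtraction. -/
theorem numPairs_hyperbolic [Fintype F] [Finite W] (Q : QuadraticForm F W) (Q' : QuadraticForm F V)
    (e : V ≃ₗ[F] F × F × W)
    (h : ∀ v, Q' v = (e v).1 * (e v).2.1 + Q (e v).2.2) :
    numPairs Q' + Nat.card W * numSing Q =
      Fintype.card F ^ 2 * (Nat.card W * numSing Q) + Fintype.card F ^ 2 * numPairs Q := by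
  classical
  have hp : ∀ u v, QuadraticMap.polar Q' u v = (e u).1 * (e v).2.1 + (e v).1 * (e u).2.1 +
      QuadraticMap.polar Q (e u).2.2 (e v).2.2 := by
    intro u v
    simp only [QuadraticMap.polar, h, map_add, Prod.fst_add, Prod.snd_add]
    ring
  have hc : Fintype.card F ^ 2 = Fintype.card (F × F) := by rw [Fintype.card_prod, sq]
  rw [hc, ← sum_zero_or, ← hc]
  congr 1
  rw [numPairs]
  have e1 : {p : V × V // Q' p.1 = 0 ∧ Q' p.2 = 0 ∧ QuadraticMap.polar Q' p.1 p.2 = 0} ≃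
      Σ x : F × F, fiberPairs Q x.1 x.2 :=
    { toFun := fun p => ⟨((e p.1.1).1, (e p.1.2).1), ((e p.1.1).2, (e p.1.2).2), by
          rw [← h, ← h, ← hp]; exact p.2⟩
      invFun := fun s => ⟨(e.symm (s.1.1, s.2.1.1), e.symm (s.1.2, s.2.1.2)), by
          rw [h, h, hp]; simpa using s.2.2⟩
      left_inv := fun v => by simp
      right_inv := fun s => by
        obtain ⟨⟨x, x'⟩, ⟨p, p'⟩, hp⟩ := s
        have h1 := e.apply_symm_apply (x, p)
        have h2 := e.apply_symm_apply (x', p')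
        have h1a : (e (e.symm (x, p))).1 = x := congrArg Prod.fst h1
        have h2a : (e (e.symm (x', p'))).1 = x' := congrArg Prod.fst h2
        have h1b : (e (e.symm (x, p))).2 = p := congrArg Prod.snd h1
        have h2b : (e (e.symm (x', p'))).2 = p' := congrArg Prod.snd h2
        apply Sigma.subtype_ext
        · exact Prod.ext h1a h2a
        · exact Prod.ext h1b h2b }
  have : ∀ x : F × F, Finite (fiberPairs Q x.1 x.2) := fun x => Subtype.finite
  rw [Nat.card_congr e1, Nat.card_sigma]
  refine Finset.sum_congr rfl fun x _ => ?_
  obtain ⟨x, x'⟩ := x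
  split_ifs with hx
  · obtain ⟨rfl, rfl⟩ := Prod.mk.inj hx
    exact fiberPairs_zero Q
  · by_cases hx0 : x = 0
    · rw [fiberPairs_swap]
      apply fiberPairs_ne
      rintro rfl
      exact hx (by rw [hx0]; rfl)
    · exact fiberPairs_ne Q x x' hx0

end Recursion

/-! ### The cone form -/

section Cone

variable (F : Type*) [Field F]

/-- `lineConeForm` as a bundled quadratic form. -/
def coneQ (m : ℕ) : QuadraticForm F (Fin (2 * m + 1) → F) :=
  (∑ i : Fin (m - 1), QuadraticMap.linMulLin
      (LinearMap.proj (⟨2 * (i : ℕ), by have := i.isLt; omega⟩ : Fin (2 * m + 1)))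
      (LinearMap.proj (⟨2 * (i : ℕ) + 1, by have := i.isLt; omega⟩ : Fin (2 * m + 1)))) +
    QuadraticMap.linMulLin (LinearMap.proj (⟨2 * m - 2, by omega⟩ : Fin (2 * m + 1)))
      (LinearMap.proj (⟨2 * m - 2, by omega⟩ : Fin (2 * m + 1)))

theorem coneQ_apply (m : ℕ) (x : Fin (2 * m + 1) → F) : coneQ F m x = lineConeForm F m x := by
  simp [coneQ, lineConeForm, sum_apply, sq]

/-- `parabolicForm` as a bundled quadratic form. -/
def parQ (m : ℕ) : QuadraticForm F (Fin (2 * m + 1) → F) :=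
  (∑ i : Fin m, QuadraticMap.linMulLin
      (LinearMap.proj (⟨2 * (i : ℕ), by have := i.isLt; omega⟩ : Fin (2 * m + 1)))
      (LinearMap.proj (⟨2 * (i : ℕ) + 1, by have := i.isLt; omega⟩ : Fin (2 * m + 1)))) +
    QuadraticMap.linMulLin (LinearMap.proj (⟨2 * m, by omega⟩ : Fin (2 * m + 1)))
      (LinearMap.proj (⟨2 * m, by omega⟩ : Fin (2 * m + 1)))

theorem parQ_apply (m : ℕ) (x : Fin (2 * m + 1) → F) : parQ F m x = parabolicForm F m x := by
  simp [parQ, parabolicForm, sum_apply, sq]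

/-- Separating the first two coordinates, which span a hyperbolic plane of the cone form. -/
def peel (k : ℕ) : (Fin (k + 2) → F) ≃ₗ[F] F × F × (Fin k → F) where
  toFun x := (x 0, x 1, fun i => x i.succ.succ)
  invFun p := Fin.cons p.1 (Fin.cons p.2.1 p.2.2)
  map_add' x y := rfl
  map_smul' c x := rfl
  left_inv x := by
    funext i
    refine Fin.cases rfl (fun i => Fin.cases rfl (fun i => rfl) i) i
  right_inv p := rfl

theorem coneQ_peel (k : ℕ) (v : Fin (2 * (k + 2) + 1) → F) :
    coneQ F (k + 2) v = (peel F (2 * (k + 1) + 1) v).1 * (peel F (2 * (k + 1) + 1) v).2.1 +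
      coneQ F (k + 1) (peel F (2 * (k + 1) + 1) v).2.2 := by
  rw [coneQ_apply, coneQ_apply]
  unfold lineConeForm
  change (∑ i : Fin (k + 1), _) + _ = _ + ((∑ i : Fin k, _) + _)
  rw [Fin.sum_univ_succ, add_assoc]
  rfl

variable [Fintype F]

theorem numSing_coneQ (k : ℕ) : numSing (coneQ F (k + 1)) = Fintype.card F ^ (2 * k + 2) := by
  induction k with
  | zero =>
    have : ∀ x : Fin 3 → F, coneQ F 1 x = x 0 ^ 2 := by
      intro x
      rw [coneQ_apply]
      simp [lineConeForm]
    rw [numSing, ← Nat.card_eq_fintype_card]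
    have e : {x : Fin (2 * (0 + 1) + 1) → F // coneQ F (0 + 1) x = 0} ≃ (Fin 2 → F) :=
      { toFun := fun x => Fin.tail x.1
        invFun := fun y => ⟨Fin.cons 0 y, by
          refine (this (Fin.cons 0 y)).trans ?_
          simp⟩
        left_inv := fun x => by
          apply Subtype.ext
          have h0 : x.1 0 = 0 := by
            have := (this x.1).symm.trans x.2
            exact pow_eq_zero_iff (two_ne_zero) |>.1 this
          refine Eq.trans ?_ (Fin.cons_self_tail x.1)
          exact congrArg (fun t => (Fin.cons t (Fin.tail x.1) : Fin 3 → F)) h0.symm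
        right_inv := fun y => by simp }
    rw [Nat.card_congr e]
    simp
  | succ k ih =>
    have h := numSing_hyperbolic (coneQ F (k + 1)) (coneQ F (k + 2))
      (peel F (2 * (k + 1) + 1)) (coneQ_peel F k)
    rw [ih] at h
    simp only [Nat.card_eq_fintype_card, Fintype.card_fun, Fintype.card_fin] at h
    have : numSing (coneQ F (k + 1 + 1)) + Fintype.card F ^ (2 * (k + 1) + 1) =
      Fintype.card F ^ (2 * (k + 1) + 2) + Fintype.card F ^ (2 * (k + 1) + 1) := by
      rw [h]; ring
    exact Nat.add_right_cancel this

theorem numPairs_coneQ (k : ℕ) : numPairs (coneQ F (k + 1)) + Fintype.card F ^ (2 * k + 3) =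
    Fintype.card F ^ (2 * k + 4) + Fintype.card F ^ (4 * k + 3) := by
  induction k with
  | zero =>
    have : numPairs (coneQ F (0 + 1)) = numSing (coneQ F (0 + 1)) * numSing (coneQ F (0 + 1)) := by
      rw [numSing, ← Nat.card_prod, numPairs]
      have h0 : ∀ x : Fin (2 * (0 + 1) + 1) → F, coneQ F (0 + 1) x = x 0 ^ 2 := by
        intro x
        rw [coneQ_apply]
        simp [lineConeForm]
      refine Nat.card_congr
        { toFun := fun p => (⟨p.1.1, p.2.1⟩, ⟨p.1.2, p.2.2.1⟩)
          invFun := fun p => ⟨(p.1.1, p.2.1), p.1.2, p.2.2, ?_⟩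
          left_inv := fun p => rfl
          right_inv := fun p => rfl }
      have h1 := p.1.2
      have h2 := p.2.2
      simp only [QuadraticMap.polar, h0, Pi.add_apply] at h1 h2 ⊢
      rw [pow_eq_zero_iff two_ne_zero] at h1 h2
      rw [h1, h2]; simp
    rw [this, numSing_coneQ]
    ring
  | succ k ih =>
    have h := numPairs_hyperbolic (coneQ F (k + 1)) (coneQ F (k + 2))
      (peel F (2 * (k + 1) + 1)) (coneQ_peel F k)
    rw [numSing_coneQ] at h
    simp only [Nat.card_eq_fintype_card, Fintype.card_fun, Fintype.card_fin] at h
    have h2 := congrArg (fun t => Fintype.card F ^ 2 * t) ih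
    generalize Fintype.card F = q at *
    have e1 : q ^ (2 * (k + 1) + 1) * q ^ (2 * k + 2) = q ^ (4 * k + 5) := by ring
    have e2 : q ^ 2 * (q ^ (2 * (k + 1) + 1) * q ^ (2 * k + 2)) = q ^ (4 * (k + 1) + 3) := by ring
    have e3 : q ^ 2 * (q ^ (2 * k + 4) + q ^ (4 * k + 3)) =
      q ^ (2 * (k + 1) + 4) + q ^ (4 * k + 5) := by ring
    have e4 : q ^ 2 * q ^ (2 * k + 3) = q ^ (2 * (k + 1) + 3) := by ring
    rw [e2, e1] at h
    rw [mul_add, e3, e4] at h2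
    change numPairs (coneQ F (k + 2)) + _ = _
    omega

end Cone

/-! ### Totally singular lines disjoint from a codimension-2 subspace -/

section Disjoint

variable {F : Type*} [Field F]
variable {V : Type*} [AddCommGroup V] [Module F V]

/-- A totally singular line disjoint from `ker φ` is mapped isomorphically onto `F²`, so it has a
unique basis lying over the standard one. -/
theorem card_disjoint_eq_card_frames [FiniteDimensional F V] (Q : QuadraticForm F V)
    (φ : V →ₗ[F] F × F) :
    Nat.card {L : Submodule F V // Module.finrank F L = 2 ∧ (∀ x ∈ L, Q x = 0) ∧
        L ⊓ LinearMap.ker φ = ⊥} =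
      Nat.card {p : V × V // φ p.1 = (1, 0) ∧ φ p.2 = (0, 1) ∧
        Q p.1 = 0 ∧ Q p.2 = 0 ∧ QuadraticMap.polar Q p.1 p.2 = 0} := by
  have key : ∀ u v : V, φ u = (1, 0) → φ v = (0, 1) → ∀ s t : F,
      φ (s • u + t • v) = (s, t) := by
    intro u v hu hv s t
    rw [map_add, map_smul, map_smul, hu, hv]
    simp
  have hfin : ∀ u v : V, φ u = (1, 0) → φ v = (0, 1) →
      Module.finrank F (Submodule.span F {u, v}) = 2 := by
    intro u v hu hv
    have hli : LinearIndependent F ![u, v] := by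
      rw [LinearIndependent.pair_iff]
      intro s t hst
      have := key u v hu hv s t
      rw [hst, map_zero] at this
      exact ⟨(congrArg Prod.fst this).symm, (congrArg Prod.snd this).symm⟩
    have := finrank_span_eq_card hli
    have hr : Set.range ![u, v] = {u, v} := by simp [Set.pair_comm]
    rwa [hr, Fintype.card_fin] at this
  symm
  refine Nat.card_congr (Equiv.ofBijective
    (fun p => ⟨Submodule.span F {p.1.1, p.1.2}, ?_, ?_, ?_⟩) ⟨?_, ?_⟩)
  · exact hfin _ _ p.2.1 p.2.2.1
  · exact (span_two Q _ _).2 p.2.2.2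
  · rw [eq_bot_iff]
    rintro x ⟨hx, hxk⟩
    obtain ⟨s, t, rfl⟩ := Submodule.mem_span_pair.1 hx
    have h1 := key _ _ p.2.1 p.2.2.1 s t
    have h2 : φ (s • p.1.1 + t • p.1.2) = 0 := hxk
    rw [h2] at h1
    have hs : s = 0 := (congrArg Prod.fst h1).symm
    have ht : t = 0 := (congrArg Prod.snd h1).symm
    simp [hs, ht]
  · rintro ⟨⟨u, v⟩, hu, hv, h⟩ ⟨⟨u', v'⟩, hu', hv', h'⟩ hh
    simp only at hu hv hu' hv'
    have hs : Submodule.span F {u, v} = Submodule.span F {u', v'} := congrArg Subtype.val hh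
    have hmu : u ∈ Submodule.span F {u', v'} := by
      rw [← hs]; exact Submodule.subset_span (by simp)
    have hmv : v ∈ Submodule.span F {u', v'} := by
      rw [← hs]; exact Submodule.subset_span (by simp)
    obtain ⟨s, t, rfl⟩ := Submodule.mem_span_pair.1 hmu
    obtain ⟨s', t', rfl⟩ := Submodule.mem_span_pair.1 hmv
    rw [key _ _ hu' hv'] at hu hv
    obtain ⟨rfl, rfl⟩ := Prod.mk.inj hu
    obtain ⟨rfl, rfl⟩ := Prod.mk.inj hv
    simp
  · rintro ⟨L, hL, hQ, hd⟩
    have hinj : Function.Injective (φ.domRestrict L) := by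
      rw [← LinearMap.ker_eq_bot, eq_bot_iff]
      intro x hx
      have : (x : V) ∈ L ⊓ LinearMap.ker φ := ⟨x.2, hx⟩
      rw [hd] at this
      exact Subtype.ext this
    have hsurj : Function.Surjective (φ.domRestrict L) := by
      refine (LinearMap.injective_iff_surjective_of_finrank_eq_finrank ?_).1 hinj
      rw [hL]; simp
    obtain ⟨u, hu⟩ := hsurj (1, 0)
    obtain ⟨v, hv⟩ := hsurj (0, 1)
    have hs : Submodule.span F {(u : V), (v : V)} = L := by
      refine Submodule.eq_of_le_of_finrank_eq ?_ ((hfin _ _ hu hv).trans hL.symm)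
      rw [Submodule.span_le]
      rintro x (rfl | rfl)
      · exact u.2
      · exact v.2
    refine ⟨⟨(u, v), hu, hv, (span_two Q _ _).1 ?_⟩, Subtype.ext hs⟩
    rw [hs]; exact hQ

/-- Adding `t a` to `u` and `c a + d b` to `v` shifts `(Q u, B(u, v), Q v)` by `(t, c, d)`, so every
pair over the standard basis arises exactly once from a totally singular one. -/
theorem card_frames_mul [Fintype F] (Q : QuadraticForm F V)
    (a b : V) (φ : V →ₗ[F] F × F)
    (hφ : ∀ v, φ v = (QuadraticMap.polar Q a v, QuadraticMap.polar Q b v))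
    (hs : Function.Surjective φ) (ha : Q a = 0) (hb : Q b = 0)
    (hab : QuadraticMap.polar Q a b = 0) :
    Nat.card {p : V × V // φ p.1 = (1, 0) ∧ φ p.2 = (0, 1) ∧
        Q p.1 = 0 ∧ Q p.2 = 0 ∧ QuadraticMap.polar Q p.1 p.2 = 0} * Fintype.card F ^ 3 =
      Nat.card (LinearMap.ker φ) ^ 2 := by
  obtain ⟨u₀, hu₀⟩ := hs (1, 0)
  obtain ⟨v₀, hv₀⟩ := hs (0, 1)
  have hφa : φ a = 0 := by
    rw [hφ, QuadraticMap.polar_self, ha, QuadraticMap.polar_comm, hab]; simp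
  have hφb : φ b = 0 := by
    rw [hφ, QuadraticMap.polar_self, hb, hab]; simp
  have hau : ∀ u, φ u = (1, 0) → QuadraticMap.polar Q u a = 1 ∧ QuadraticMap.polar Q u b = 0 := by
    intro u hu
    rw [hφ] at hu
    rw [QuadraticMap.polar_comm Q u a, QuadraticMap.polar_comm Q u b]
    exact Prod.mk.inj hu
  have hav : ∀ u, φ u = (0, 1) → QuadraticMap.polar Q u a = 0 ∧ QuadraticMap.polar Q u b = 1 := by
    intro u hu
    rw [hφ] at hu
    rw [QuadraticMap.polar_comm Q u a, QuadraticMap.polar_comm Q u b]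
    exact Prod.mk.inj hu
  have hQu : ∀ u, φ u = (1, 0) → ∀ c : F, Q (u + c • a) = Q u + c := by
    intro u hu c
    rw [QuadraticMap.map_add Q, QuadraticMap.map_smul, ha, QuadraticMap.polar_smul_right,
      (hau u hu).1]
    simp
  have hQv : ∀ v, φ v = (0, 1) → ∀ c d : F, Q (v + (c • a + d • b)) = Q v + d := by
    intro v hv c d
    rw [QuadraticMap.map_add Q v, QuadraticMap.map_add Q (c • a), QuadraticMap.map_smul,
      QuadraticMap.map_smul, ha, hb, QuadraticMap.polar_add_right]
    simp only [QuadraticMap.polar_smul_right, QuadraticMap.polar_smul_left, hab,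
      (hav v hv).1, (hav v hv).2]
    simp
  have hB : ∀ u v, φ u = (1, 0) → φ v = (0, 1) → ∀ t c d : F,
      QuadraticMap.polar Q (u + t • a) (v + (c • a + d • b)) =
        QuadraticMap.polar Q u v + c := by
    intro u v hu hv t c d
    have h1 : QuadraticMap.polar Q a v = 0 := by
      rw [QuadraticMap.polar_comm]; exact (hav v hv).1
    simp only [QuadraticMap.polar_add_right, QuadraticMap.polar_add_left,
      QuadraticMap.polar_smul_right, QuadraticMap.polar_smul_left, hab,
      (hau u hu).1, (hau u hu).2, h1, QuadraticMap.polar_self, ha]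
    simp
  have e : {p : V × V // φ p.1 = (1, 0) ∧ φ p.2 = (0, 1) ∧
        Q p.1 = 0 ∧ Q p.2 = 0 ∧ QuadraticMap.polar Q p.1 p.2 = 0} × (F × F × F) ≃
      {p : V × V // φ p.1 = (1, 0) ∧ φ p.2 = (0, 1)} :=
    { toFun := fun x => ⟨(x.1.1.1 + x.2.1 • a, x.1.1.2 + (x.2.2.1 • a + x.2.2.2 • b)), by
        simp [hφa, hφb, x.1.2.1, x.1.2.2.1]⟩
      invFun := fun p => (⟨(p.1.1 + (-(Q p.1.1)) • a,
          p.1.2 + ((-(QuadraticMap.polar Q p.1.1 p.1.2)) • a + (-(Q p.1.2)) • b)), by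
            refine ⟨by simp [hφa, p.2.1], by simp [hφa, hφb, p.2.2], ?_, ?_, ?_⟩
            · rw [hQu _ p.2.1]; ring
            · rw [hQv _ p.2.2]; ring
            · rw [hB _ _ p.2.1 p.2.2]; ring⟩,
          (Q p.1.1, QuadraticMap.polar Q p.1.1 p.1.2, Q p.1.2))
      left_inv := by
        rintro ⟨⟨⟨u, v⟩, hu, hv, h1, h2, h3⟩, t, c, d⟩
        simp only at hu hv h1 h2 h3
        simp only [hQu u hu, hQv v hv, hB u v hu hv, h1, h2, h3, zero_add, Prod.mk.injEq,
          Subtype.mk.injEq, and_true]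
        constructor
        · module
        · module
      right_inv := by
        rintro ⟨⟨u, v⟩, hu, hv⟩
        simp only [Prod.mk.injEq, Subtype.mk.injEq]
        constructor
        · module
        · module }
  have e2 : {p : V × V // φ p.1 = (1, 0) ∧ φ p.2 = (0, 1)} ≃
      LinearMap.ker φ × LinearMap.ker φ :=
    { toFun := fun p => (⟨p.1.1 - u₀, by simp [p.2.1, hu₀]⟩, ⟨p.1.2 - v₀, by simp [p.2.2, hv₀]⟩)
      invFun := fun r => ⟨(r.1.1 + u₀, r.2.1 + v₀), by
        have h1 : φ r.1.1 = 0 := r.1.2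
        have h2 : φ r.2.1 = 0 := r.2.2
        simp [h1, h2, hu₀, hv₀]⟩
      left_inv := fun p => by simp
      right_inv := fun r => by simp }
  have h3 : Fintype.card F ^ 3 = Nat.card (F × F × F) := by
    rw [Nat.card_eq_fintype_card]; simp only [Fintype.card_prod]; ring
  rw [h3, ← Nat.card_prod, Nat.card_congr (e.trans e2), Nat.card_prod, sq]

end Disjoint

/-! ### The vertex of the cone and the closed formulas -/

section Main

variable {F : Type*} [Field F]

/-- Nondegeneracy in every characteristic: in characteristic 2 the polar form has a one-dimensional
radical, which is spanned by a nonsingular vector. -/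
theorem parQ_nondeg (n : ℕ) (c : Fin (2 * n + 1) → F) (hQ : parQ F n c = 0)
    (hB : ∀ v, QuadraticMap.polar (parQ F n) c v = 0) : c = 0 := by
  have hpol : ∀ v, QuadraticMap.polar (parQ F n) c v =
      (∑ i : Fin n, (c ⟨2 * (i : ℕ), by have := i.isLt; omega⟩ *
          v ⟨2 * (i : ℕ) + 1, by have := i.isLt; omega⟩ +
        c ⟨2 * (i : ℕ) + 1, by have := i.isLt; omega⟩ *
          v ⟨2 * (i : ℕ), by have := i.isLt; omega⟩)) +
        2 * c ⟨2 * n, by omega⟩ * v ⟨2 * n, by omega⟩ := by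
    intro v
    simp only [QuadraticMap.polar, parQ_apply, parabolicForm, Pi.add_apply]
    rw [add_sub_add_comm, add_sub_add_comm, ← Finset.sum_sub_distrib, ← Finset.sum_sub_distrib]
    congr 1
    · refine Finset.sum_congr rfl fun i _ => ?_
      ring
    · ring
  have h0 : ∀ i : Fin n, c ⟨2 * (i : ℕ), by have := i.isLt; omega⟩ = 0 := by
    intro i
    have := hB (Pi.single ⟨2 * (i : ℕ) + 1, by have := i.isLt; omega⟩ 1)
    rw [hpol, Finset.sum_eq_single i] at this
    · have hi := i.isLt
      simpa [Pi.single_apply, show 2 * n ≠ 2 * (i : ℕ) + 1 by omega] using this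
    · intro j _ hj
      have hj' : (j : ℕ) ≠ i := fun h => hj (Fin.ext h)
      simp [hj', show 2 * (j : ℕ) ≠ 2 * (i : ℕ) + 1 by omega]
    · simp
  have h1 : ∀ i : Fin n, c ⟨2 * (i : ℕ) + 1, by have := i.isLt; omega⟩ = 0 := by
    intro i
    have := hB (Pi.single ⟨2 * (i : ℕ), by have := i.isLt; omega⟩ 1)
    rw [hpol, Finset.sum_eq_single i] at this
    · have hi := i.isLt
      simpa [Pi.single_apply, show n ≠ (i : ℕ) by omega] using this
    · intro j _ hj
      have hj' : (j : ℕ) ≠ i := fun h => hj (Fin.ext h)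
      simp [hj', show 2 * (j : ℕ) + 1 ≠ 2 * (i : ℕ) by omega]
    · simp
  have h2 : c ⟨2 * n, by omega⟩ = 0 := by
    rw [parQ_apply, parabolicForm, Finset.sum_eq_zero, zero_add] at hQ
    · exact (pow_eq_zero_iff two_ne_zero).1 hQ
    · intro i _
      rw [h0, zero_mul]
  funext j
  obtain ⟨j, hj⟩ := j
  obtain h | ⟨i, hi, rfl | rfl⟩ : j = 2 * n ∨ ∃ i, i < n ∧ (j = 2 * i ∨ j = 2 * i + 1) := by
    by_cases h : j = 2 * n
    · exact Or.inl h
    · exact Or.inr ⟨j / 2, by omega, by omega⟩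
  · subst h; exact h2
  · exact h0 ⟨i, hi⟩
  · exact h1 ⟨i, hi⟩

/-- Totally singular subspaces inside `R` correspond to those of any isometric copy of `R`. -/
theorem card_subspaces_transfer {V W : Type*} [AddCommGroup V] [Module F V]
    [AddCommGroup W] [Module F W] (R : Submodule F V) (f : R ≃ₗ[F] W) (η : V → F) (η' : W → F)
    (h : ∀ x : R, η x.1 = η' (f x)) (d : ℕ) :
    Nat.card {L : Submodule F V // Module.finrank F L = d ∧ L ≤ R ∧ ∀ x ∈ L, η x = 0} =
      Nat.card {L : Submodule F W // Module.finrank F L = d ∧ ∀ x ∈ L, η' x = 0} := by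
  set g : W →ₗ[F] V := R.subtype ∘ₗ f.symm.toLinearMap with hg
  have hgi : Function.Injective g := R.injective_subtype.comp f.symm.injective
  have hη : ∀ w, η (g w) = η' w := by
    intro w
    have := h (f.symm w)
    rwa [f.apply_symm_apply] at this
  have hgR : ∀ w, g w ∈ R := fun w => (f.symm w).2
  have hgf : ∀ x : R, g (f x) = x := by
    intro x
    simp [hg]
  symm
  refine Nat.card_congr (Equiv.ofBijective (fun L => ⟨L.1.map g, ?_, ?_, ?_⟩) ⟨?_, ?_⟩)
  · rw [← (Submodule.equivMapOfInjective g hgi L.1).finrank_eq, L.2.1]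
  · rintro _ ⟨w, -, rfl⟩
    exact hgR w
  · rintro _ ⟨w, hw, rfl⟩
    rw [hη]; exact L.2.2 w hw
  · intro L L' hL
    exact Subtype.ext (Submodule.map_injective_of_injective hgi (congrArg Subtype.val hL))
  · rintro ⟨L, hd, hLR, hL⟩
    have hm : (L.comap g).map g = L := by
      apply Submodule.map_comap_eq_self
      intro x hx
      exact ⟨f ⟨x, hLR hx⟩, hgf _⟩
    refine ⟨⟨L.comap g, ?_, ?_⟩, Subtype.ext hm⟩
    · rw [← hd]
      conv_rhs => rw [← hm]
      rw [← (Submodule.equivMapOfInjective g hgi _).finrank_eq]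
    · intro w hw
      rw [← hη]; exact hL _ hw

/-- Vectors `a, b` spanning the vertex of the cone: `R` is the common kernel of the independent
functionals `B(a, ·)` and `B(b, ·)`. -/
theorem exists_dual_frame (n : ℕ)
    (R : Submodule F (Fin (2 * (n + 2) + 1) → F))
    (hR : Module.finrank F R = 2 * (n + 2) - 1)
    (f : R ≃ₗ[F] (Fin (2 * (n + 1) + 1) → F))
    (hf : ∀ x : R, parQ F (n + 2) x.1 = coneQ F (n + 1) (f x)) :
    ∃ (a b : Fin (2 * (n + 2) + 1) → F) (φ : (Fin (2 * (n + 2) + 1) → F) →ₗ[F] F × F),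
      (∀ v, φ v = (QuadraticMap.polar (parQ F (n + 2)) a v,
        QuadraticMap.polar (parQ F (n + 2)) b v)) ∧
      Function.Surjective φ ∧ LinearMap.ker φ = R ∧
      parQ F (n + 2) a = 0 ∧ parQ F (n + 2) b = 0 ∧
      QuadraticMap.polar (parQ F (n + 2)) a b = 0 := by
  set Q := parQ F (n + 2) with hQdef
  -- Vectors supported on the last two coordinates belong to the vertex of the cone.
  have hrad : ∀ z : Fin (2 * (n + 1) + 1) → F,
      (∀ i : Fin (2 * (n + 1) + 1), (i : ℕ) < 2 * n + 1 → z i = 0) →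
      ∀ x, coneQ F (n + 1) (z + x) = coneQ F (n + 1) x := by
    intro z hz x
    rw [coneQ_apply, coneQ_apply, lineConeForm]
    congr 1
    · refine Finset.sum_congr rfl fun i _ => ?_
      have hi : (i : ℕ) < n := i.isLt
      rw [Pi.add_apply, Pi.add_apply, hz _ (by simp only; omega), hz _ (by simp only; omega),
        zero_add, zero_add]
    · rw [Pi.add_apply, hz _ (by simp only; omega), zero_add]
  have hsing : ∀ z : Fin (2 * (n + 1) + 1) → F,
      (∀ i : Fin (2 * (n + 1) + 1), (i : ℕ) < 2 * n + 1 → z i = 0) →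
      Q (f.symm z : R).1 = 0 ∧ ∀ r : R, QuadraticMap.polar Q (f.symm z : R).1 r.1 = 0 := by
    intro z hz
    have h1 : Q (f.symm z : R).1 = 0 := by
      rw [hf, f.apply_symm_apply, ← add_zero z, hrad z hz, QuadraticMap.map_zero]
    refine ⟨h1, fun r => ?_⟩
    rw [QuadraticMap.polar, h1, ← Submodule.coe_add, hf, map_add, f.apply_symm_apply, hrad z hz, hf]
    simp
  set za : Fin (2 * (n + 1) + 1) → F := Pi.single ⟨2 * n + 1, by omega⟩ 1 with hza
  set zb : Fin (2 * (n + 1) + 1) → F := Pi.single ⟨2 * n + 2, by omega⟩ 1 with hzb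
  have hza0 : ∀ i : Fin (2 * (n + 1) + 1), (i : ℕ) < 2 * n + 1 → za i = 0 := by
    intro i hi
    exact Pi.single_eq_of_ne (fun h => by rw [h] at hi; simp at hi) _
  have hzb0 : ∀ i : Fin (2 * (n + 1) + 1), (i : ℕ) < 2 * n + 1 → zb i = 0 := by
    intro i hi
    exact Pi.single_eq_of_ne (fun h => by rw [h] at hi; simp at hi) _
  set φ : (Fin (2 * (n + 2) + 1) → F) →ₗ[F] F × F :=
    (Q.polarBilin (f.symm za : R).1).prod (Q.polarBilin (f.symm zb : R).1) with hφ
  have hφv : ∀ v, φ v = (QuadraticMap.polar Q (f.symm za : R).1 v,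
      QuadraticMap.polar Q (f.symm zb : R).1 v) := fun v => rfl
  have hs : Function.Surjective φ := by
    rw [← LinearMap.dualMap_injective_iff, ← LinearMap.ker_eq_bot, eq_bot_iff]
    intro ψ hψ
    have hψ' : ∀ v, ψ (φ v) = 0 := fun v => congrArg (fun t => t v) hψ
    -- A functional `ψ = (s, t)` vanishing on the range makes `s a + t b` a singular vector of the
    -- radical of the polar form.
    set s := ψ (1, 0)
    set t := ψ (0, 1)
    have hst : ∀ x y, ψ (x, y) = x * s + y * t := by
      intro x y
      have : ((x, y) : F × F) = x • (1, 0) + y • (0, 1) := by simp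
      rw [this, map_add, map_smul, map_smul]; rfl
    set z := s • za + t • zb with hz
    have hz0 : ∀ i : Fin (2 * (n + 1) + 1), (i : ℕ) < 2 * n + 1 → z i = 0 := by
      intro i hi
      simp [hz, hza0 i hi, hzb0 i hi]
    have hc : (f.symm z : R).1 = 0 := by
      apply parQ_nondeg _ _ (hsing z hz0).1
      intro v
      have h1 : (f.symm z : R).1 = s • (f.symm za : R).1 + t • (f.symm zb : R).1 := by
        simp [hz]
      have h2 := hψ' v
      rw [hφv, hst] at h2
      rw [h1, QuadraticMap.polar_add_left, QuadraticMap.polar_smul_left,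
        QuadraticMap.polar_smul_left, smul_eq_mul, smul_eq_mul, ← h2]
      ring
    have hz' : z = 0 := by
      have : f.symm z = 0 := Subtype.ext hc
      simpa using this
    have h1 : s = 0 := by
      have := congrFun hz' ⟨2 * n + 1, by omega⟩
      simpa [hz, hza, hzb, Pi.single_apply] using this
    have h2 : t = 0 := by
      have := congrFun hz' ⟨2 * n + 2, by omega⟩
      simpa [hz, hza, hzb, Pi.single_apply] using this
    refine LinearMap.ext fun p => ?_
    obtain ⟨x, y⟩ := p
    rw [hst, h1, h2]; simp
  refine ⟨_, _, φ, hφv, hs, ?_, (hsing za hza0).1, (hsing zb hzb0).1, (hsing za hza0).2 _⟩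
  symm
  apply Submodule.eq_of_le_of_finrank_eq
  · intro r hr
    change φ r = 0
    rw [hφv, (hsing za hza0).2 ⟨r, hr⟩, (hsing zb hzb0).2 ⟨r, hr⟩]
    rfl
  · have h := LinearMap.finrank_range_add_finrank_ker φ
    rw [LinearMap.range_eq_top.2 hs, finrank_top] at h
    simp only [Module.finrank_prod, Module.finrank_self, Module.finrank_fin_fun] at h
    omega

/-- The closed formula for the number of lines, extracted from the count of singular pairs. -/
theorem lines_formula (q k M N T : ℕ) (hq : 2 ≤ q)
    (h : M * ((q ^ 2 - 1) * (q ^ 2 - q)) + N + (N - 1) * q = T)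
    (hN : N = q ^ (2 * k + 2)) (hT : T + q ^ (2 * k + 3) = q ^ (2 * k + 4) + q ^ (4 * k + 3)) :
    M = 1 + q * (q ^ (2 * k) - 1) / (q - 1) +
        q ^ 2 * (q ^ 2 * ((q ^ (2 * k - 2) - 1) * (q ^ (2 * k) - 1)) /
            ((q ^ 2 - 1) * (q - 1)) +
          (q ^ (2 * k) - 1) / (q - 1)) := by
  obtain ⟨p, rfl⟩ : ∃ p, q = p + 1 := ⟨q - 1, by omega⟩
  have hp : 0 < p := by omega
  have e1 : (p + 1) ^ 2 - 1 = p * (p + 2) := by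
    rw [Nat.sub_eq_iff_eq_add (Nat.one_le_pow _ _ (by omega))]; ring
  have e2 : (p + 1) ^ 2 - (p + 1) = p * (p + 1) := by
    rw [Nat.sub_eq_iff_eq_add (Nat.le_self_pow two_ne_zero _)]; ring
  obtain ⟨N', rfl⟩ : ∃ N', N = N' + 1 :=
    ⟨N - 1, by have := Nat.one_le_pow (2 * k + 2) (p + 1) (by omega); omega⟩
  rw [e1, e2, Nat.add_sub_cancel] at h
  rw [e1, Nat.add_sub_cancel]
  have hD : p * (p + 2) * (p * (p + 1)) ≠ 0 := by positivity
  subst h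
  rcases k with _ | j
  -- For `k = 0` the exponent `2 * k - 2` truncates to `0`; the formula then reads `M = 1`.
  · have : M * (p * (p + 2) * (p * (p + 1))) = 1 * (p * (p + 2) * (p * (p + 1))) := by
      zify at hN hT ⊢
      linear_combination hT - (p + 2) * hN
    have := Nat.eq_of_mul_eq_mul_right (Nat.pos_of_ne_zero hD) this
    simp [this]
  -- Here `p = q - 1`, `C = (q^(2j) - 1) / (q² - 1)` and `A = (q^(2j+2) - 1) / (q - 1)`.
  · obtain ⟨C, hC⟩ : ∃ C, (p + 1) ^ (2 * j) = p * (p + 2) * C + 1 := by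
      obtain ⟨C, hC⟩ := Nat.sub_dvd_pow_sub_pow ((p + 1) ^ 2) 1 j
      rw [e1, one_pow, ← pow_mul] at hC
      have := Nat.one_le_pow (2 * j) (p + 1) (by omega)
      exact ⟨C, by omega⟩
    have hA : (p + 1) ^ (2 * (j + 1)) = p * ((p + 2) * ((p + 1) ^ 2 * C + 1)) + 1 := by
      rw [mul_add, pow_add, hC]; ring
    have hC' : (p + 1) ^ (2 * (j + 1) - 2) = p * (p + 2) * C + 1 := by
      rw [← hC]; congr 1
    rw [hA, hC', Nat.add_sub_cancel, Nat.add_sub_cancel]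
    generalize hA' : (p + 2) * ((p + 1) ^ 2 * C + 1) = A at *
    have d1 : (p + 1) * (p * A) / p = (p + 1) * A := by
      rw [show (p + 1) * (p * A) = p * ((p + 1) * A) by ring, Nat.mul_div_cancel_left _ hp]
    have d2 : p * A / p = A := Nat.mul_div_cancel_left _ hp
    have d3 : (p + 1) ^ 2 * (p * (p + 2) * C * (p * A)) / (p * (p + 2) * p) =
        (p + 1) ^ 2 * (C * A) := by
      rw [show (p + 1) ^ 2 * (p * (p + 2) * C * (p * A)) =
        (p * (p + 2) * p) * ((p + 1) ^ 2 * (C * A)) by ring,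
        Nat.mul_div_cancel_left _ (by positivity)]
    rw [d1, d2, d3]
    apply Nat.eq_of_mul_eq_mul_right (Nat.pos_of_ne_zero hD)
    have p1 : (p + 1) ^ (2 * (j + 1) + 2) = (p + 1) ^ 2 * (p * A + 1) := by rw [← hA]; ring
    have p2 : (p + 1) ^ (2 * (j + 1) + 3) = (p + 1) ^ 3 * (p * A + 1) := by rw [← hA]; ring
    have p3 : (p + 1) ^ (2 * (j + 1) + 4) = (p + 1) ^ 4 * (p * A + 1) := by rw [← hA]; ring
    have p4 : (p + 1) ^ (4 * (j + 1) + 3) = (p + 1) ^ 3 * (p * A + 1) ^ 2 := by rw [← hA]; ring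
    rw [p1] at hN
    rw [p2, p3, p4] at hT
    zify at hN hT hA' ⊢
    linear_combination hT - (p + 2) * hN - (p + 1) ^ 3 * p * A * p * hA'

end Main

/-- For the parabolic quadric `Q(2n,q)` in `PG(2n,q)` and a codimension-2
subspace `R` meeting `Q` in a cone with line vertex over a parabolic quadric `Q(2n−4,q)`:
`|Q ∩ R| = (q^{2n−2}−1)/(q−1)`, the number of totally singular lines contained in `R` is
`1 + q(q^{2n−4}−1)/(q−1) + q²(q²(q^{2n−6}−1)(q^{2n−4}−1)/((q²−1)(q−1)) + (q^{2n−4}−1)/(q−1))`,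
and the number of totally singular lines of `Q` disjoint from `R` is `q^{4n−5}`. -/
theorem stmt_19 {F : Type*} [Field F] [Fintype F] (n : ℕ) (hn : 2 ≤ n)
    (q : ℕ) (hq : q = Fintype.card F)
    (R : Submodule F (Fin (2 * n + 1) → F))
    (hR : Module.finrank F R = 2 * n - 1)
    (hcone : ∃ f : R ≃ₗ[F] (Fin (2 * (n - 1) + 1) → F),
      ∀ x : R, parabolicForm F n x.1 = lineConeForm F (n - 1) (f x)) :
    Nat.card {L : Submodule F (Fin (2 * n + 1) → F) //
        Module.finrank F L = 1 ∧ L ≤ R ∧ ∀ x ∈ L, parabolicForm F n x = 0} =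
      (q ^ (2 * n - 2) - 1) / (q - 1) ∧
    Nat.card {L : Submodule F (Fin (2 * n + 1) → F) //
        Module.finrank F L = 2 ∧ L ≤ R ∧ ∀ x ∈ L, parabolicForm F n x = 0} =
      1 + q * (q ^ (2 * n - 4) - 1) / (q - 1) +
        q ^ 2 * (q ^ 2 * ((q ^ (2 * n - 6) - 1) * (q ^ (2 * n - 4) - 1)) /
            ((q ^ 2 - 1) * (q - 1)) +
          (q ^ (2 * n - 4) - 1) / (q - 1)) ∧
    Nat.card {L : Submodule F (Fin (2 * n + 1) → F) //
        Module.finrank F L = 2 ∧ (∀ x ∈ L, parabolicForm F n x = 0) ∧ L ⊓ R = ⊥} =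
      q ^ (4 * n - 5) := by
  obtain ⟨f, hf⟩ := hcone
  obtain ⟨k, rfl⟩ : ∃ k, n = k + 2 := ⟨n - 2, by omega⟩
  subst hq
  have hq2 : 2 ≤ Fintype.card F := Fintype.one_lt_card
  change R ≃ₗ[F] (Fin (2 * (k + 1) + 1) → F) at f
  have hf' : ∀ x : R, parabolicForm F (k + 2) x.1 = coneQ F (k + 1) (f x) := fun x => by
    rw [coneQ_apply]; exact hf x
  refine ⟨?_, ?_, ?_⟩
  · rw [card_subspaces_transfer R f _ _ hf']
    have h := card_points_s19 (coneQ F (k + 1))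
    rw [numSing_coneQ] at h
    symm
    apply Nat.div_eq_of_eq_mul_left (by omega)
    have : 2 * (k + 2) - 2 = 2 * k + 2 := by omega
    rw [this, ← h, Nat.add_sub_cancel]
  · rw [card_subspaces_transfer R f _ _ hf']
    exact lines_formula _ k _ _ _ hq2 (card_lines (coneQ F (k + 1))) (numSing_coneQ F k)
      (numPairs_coneQ F k)
  · obtain ⟨a, b, φ, hφ, hs, rfl, ha, hb, hab⟩ := exists_dual_frame k R hR f
      (fun x => by rw [parQ_apply]; exact hf' x)
    have h := card_frames_mul (parQ F (k + 2)) a b φ hφ hs ha hb hab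
    rw [← card_disjoint_eq_card_frames, Module.natCard_eq_pow_finrank (K := F) (V := LinearMap.ker φ), hR,
      Nat.card_eq_fintype_card (α := F)] at h
    simp only [parQ_apply] at h
    apply Nat.eq_of_mul_eq_mul_right (show 0 < Fintype.card F ^ 3 by positivity)
    rw [h, ← pow_mul, ← pow_add]
    congr 1
    omega
end
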